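/- arXiv:2602.03653 — 7 statements merged into one kernel-verified Lean document; each statement's English description precedes it below -/
import Mathlib

section
/- A bounded double complex of finite-dimensional complex vector spaces satisfies the ∂∂̄-lemma if and only if Δ_k := Σ_{p+q=k} (h_BC^{p,q} + h_A^{p,q}) − 2 b_k equals 0 for every k ∈ ℤ. -/
open Submodule

/-- A double complex of complex vector spaces, presented as a bigraded direct-sum
decomposition `K p q` of an ambient space `V`, together with anticommuting
differentials `d1 = ∂` (of bidegree `(1,0)`) and `d2 = ∂̄` (of bidegree `(0,1)`). -/
structure DoubleComplex (V : Type*) [AddCommGroup V] [Module ℂ V] where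
  K : ℤ → ℤ → Submodule ℂ V
  isInternal : DirectSum.IsInternal fun pq : ℤ × ℤ => K pq.1 pq.2
  d1 : V →ₗ[ℂ] V
  d2 : V →ₗ[ℂ] V
  d1_mem : ∀ p q : ℤ, ∀ x ∈ K p q, d1 x ∈ K (p + 1) q
  d2_mem : ∀ p q : ℤ, ∀ x ∈ K p q, d2 x ∈ K p (q + 1)
  d1_d1 : d1 ∘ₗ d1 = 0
  d2_d2 : d2 ∘ₗ d2 = 0
  anticomm : d1 ∘ₗ d2 + d2 ∘ₗ d1 = 0

/-- The dimension (as a natural number) of the quotient of a submodule `M` of `V`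
by (the trace on `M` of) a submodule `N`. -/
noncomputable def qdim {V : Type*} [AddCommGroup V] [Module ℂ V]
    (M N : Submodule ℂ V) : ℕ :=
  Module.finrank ℂ (↥M ⧸ N.comap M.subtype)

/-- The linear map between quotients `M₁/N₁ → M₂/N₂` induced by the identity,
for `M₁ ≤ M₂` and `N₁ ≤ N₂`. -/
def quotMap {V : Type*} [AddCommGroup V] [Module ℂ V] {M₁ N₁ M₂ N₂ : Submodule ℂ V}
    (hM : M₁ ≤ M₂) (hN : N₁ ≤ N₂) :
    (↥M₁ ⧸ N₁.comap M₁.subtype) →ₗ[ℂ] (↥M₂ ⧸ N₂.comap M₂.subtype) :=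
  Submodule.mapQ _ _ (Submodule.inclusion hM) fun _ hx => hN hx

namespace DoubleComplex

variable {V : Type*} [AddCommGroup V] [Module ℂ V] (D : DoubleComplex V)

/-- A double complex is bounded if only finitely many components are non-zero. -/
def Bounded : Prop := Set.Finite {pq : ℤ × ℤ | D.K pq.1 pq.2 ≠ ⊥}

lemma d1_d1_apply (x : V) : D.d1 (D.d1 x) = 0 := by
  simpa using LinearMap.ext_iff.mp D.d1_d1 x

lemma d2_d2_apply (x : V) : D.d2 (D.d2 x) = 0 := by
  simpa using LinearMap.ext_iff.mp D.d2_d2 x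

lemma anticomm_apply (x : V) : D.d1 (D.d2 x) + D.d2 (D.d1 x) = 0 := by
  simpa using LinearMap.ext_iff.mp D.anticomm x

/-- Numerator `ker ∂̄ ∩ K^{p,q}` of the Dolbeault cohomology. -/
def dolN (p q : ℤ) : Submodule ℂ V := LinearMap.ker D.d2 ⊓ D.K p q
/-- Denominator `∂̄ K^{p,q-1}` of the Dolbeault cohomology. -/
def dolD (p q : ℤ) : Submodule ℂ V := (D.K p (q - 1)).map D.d2
/-- Numerator `ker ∂ ∩ K^{p,q}` of the conjugate Dolbeault cohomology. -/
def conjN (p q : ℤ) : Submodule ℂ V := LinearMap.ker D.d1 ⊓ D.K p q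
/-- Denominator `∂ K^{p-1,q}` of the conjugate Dolbeault cohomology. -/
def conjD (p q : ℤ) : Submodule ℂ V := (D.K (p - 1) q).map D.d1
/-- Numerator `ker ∂ ∩ ker ∂̄ ∩ K^{p,q}` of the Bott-Chern cohomology. -/
def bcN (p q : ℤ) : Submodule ℂ V := LinearMap.ker D.d1 ⊓ LinearMap.ker D.d2 ⊓ D.K p q
/-- Denominator `∂∂̄ K^{p-1,q-1}` of the Bott-Chern cohomology. -/
def bcD (p q : ℤ) : Submodule ℂ V := (D.K (p - 1) (q - 1)).map (D.d1 ∘ₗ D.d2)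
/-- Numerator `ker ∂∂̄ ∩ K^{p,q}` of the Aeppli cohomology. -/
def aeN (p q : ℤ) : Submodule ℂ V := LinearMap.ker (D.d1 ∘ₗ D.d2) ⊓ D.K p q
/-- Denominator `∂ K^{p-1,q} + ∂̄ K^{p,q-1}` of the Aeppli cohomology. -/
def aeD (p q : ℤ) : Submodule ℂ V := (D.K (p - 1) q).map D.d1 ⊔ (D.K p (q - 1)).map D.d2

/-- The degree-`k` part `Tot^k = ⊕_{p+q=k} K^{p,q}` of the total complex. -/
def Tot (k : ℤ) : Submodule ℂ V := ⨆ p : ℤ, D.K p (k - p)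
/-- The total differential `d = ∂ + ∂̄`. -/
def dT : V →ₗ[ℂ] V := D.d1 + D.d2
/-- Numerator `ker d ∩ Tot^k` of the de Rham cohomology of the total complex. -/
def dRN (k : ℤ) : Submodule ℂ V := LinearMap.ker D.dT ⊓ D.Tot k
/-- Denominator `d (Tot^{k-1})` of the de Rham cohomology of the total complex. -/
def dRD (k : ℤ) : Submodule ℂ V := (D.Tot (k - 1)).map D.dT

/-- Hodge number `h_∂̄^{p,q}`. -/
noncomputable def hDol (p q : ℤ) : ℕ := qdim (D.dolN p q) (D.dolD p q)
/-- Conjugate Hodge number `h_∂^{p,q}`. -/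
noncomputable def hConj (p q : ℤ) : ℕ := qdim (D.conjN p q) (D.conjD p q)
/-- Bott-Chern number `h_BC^{p,q}`. -/
noncomputable def hBC (p q : ℤ) : ℕ := qdim (D.bcN p q) (D.bcD p q)
/-- Aeppli number `h_A^{p,q}`. -/
noncomputable def hAe (p q : ℤ) : ℕ := qdim (D.aeN p q) (D.aeD p q)
/-- Betti number `b_k` of the total complex. -/
noncomputable def b (k : ℤ) : ℕ := qdim (D.dRN k) (D.dRD k)

/-- The `∂∂̄`-lemma property:
`ker ∂ ∩ ker ∂̄ ∩ (im ∂ + im ∂̄) ∩ K^{p,q} = ∂∂̄ K^{p-1,q-1}` for every `(p,q)`. -/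
def SatisfiesDdbarLemma : Prop :=
  ∀ p q : ℤ,
    LinearMap.ker D.d1 ⊓ LinearMap.ker D.d2 ⊓ (D.conjD p q ⊔ D.dolD p q) ⊓ D.K p q =
      D.bcD p q

end DoubleComplex

namespace DoubleComplex

variable {V : Type*} [AddCommGroup V] [Module ℂ V] (D : DoubleComplex V)

lemma qdim_eq [FiniteDimensional ℂ V] {M N : Submodule ℂ V} (h : N ≤ M) :
    (qdim M N : ℤ) = (Module.finrank ℂ M : ℤ) - Module.finrank ℂ N := by
  have h1 := Submodule.finrank_quotient_add_finrank (N.comap M.subtype)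
  have h2 := (Submodule.comapSubtypeEquivOfLe h).finrank_eq
  unfold qdim
  omega

lemma hom_ext {W : Type*} [AddCommGroup W] [Module ℂ W] {f g : V →ₗ[ℂ] W}
    (h : ∀ p q : ℤ, ∀ x ∈ D.K p q, f x = g x) : f = g := by
  ext x
  have hx : x ∈ ⨆ pq : ℤ × ℤ, D.K pq.1 pq.2 := by
    rw [D.isInternal.submodule_iSup_eq_top]; trivial
  induction hx using Submodule.iSup_induction' with
  | mem i x hx => exact h _ _ x hx
  | zero => simp
  | add x y _ _ hx hy => simp [hx, hy]

/-- the direct sum decomposition as an equivalence -/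
noncomputable def eqv : (DirectSum (ℤ × ℤ) fun pq => D.K pq.1 pq.2) ≃ₗ[ℂ] V :=
  LinearEquiv.ofBijective (DirectSum.coeLinearMap fun pq : ℤ × ℤ => D.K pq.1 pq.2) D.isInternal

lemma eqv_symm (p q : ℤ) (x : V) (hx : x ∈ D.K p q) :
    D.eqv.symm x = DirectSum.lof ℂ (ℤ × ℤ) (fun pq => D.K pq.1 pq.2) (p, q) ⟨x, hx⟩ := by
  rw [LinearEquiv.symm_apply_eq]
  exact (DirectSum.coeLinearMap_lof (fun pq : ℤ × ℤ => D.K pq.1 pq.2) (p, q) ⟨x, hx⟩).symm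

/-- projection to a component -/
noncomputable def pr (p q : ℤ) : V →ₗ[ℂ] V :=
  (D.K p q).subtype ∘ₗ DirectSum.component ℂ (ℤ × ℤ) (fun pq => D.K pq.1 pq.2) (p, q) ∘ₗ
    D.eqv.symm.toLinearMap

lemma pr_mem (p q : ℤ) (x : V) : D.pr p q x ∈ D.K p q := by
  simp [pr]

lemma pr_self {p q : ℤ} {x : V} (hx : x ∈ D.K p q) : D.pr p q x = x := by
  simp only [pr, LinearMap.comp_apply, LinearEquiv.coe_coe, D.eqv_symm p q x hx]
  rw [DirectSum.component.lof_self]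
  rfl

lemma pr_ne {p q p' q' : ℤ} {x : V} (hx : x ∈ D.K p' q') (h : (p', q') ≠ (p, q)) :
    D.pr p q x = 0 := by
  simp only [pr, LinearMap.comp_apply, LinearEquiv.coe_coe, D.eqv_symm p' q' x hx]
  rw [DirectSum.component.of, dif_neg h]
  rfl

/-- the sign automorphism -/
noncomputable def sg : V →ₗ[ℂ] V :=
  (DirectSum.toModule ℂ (ℤ × ℤ) V fun pq => ((-1 : ℂ) ^ pq.2) • (D.K pq.1 pq.2).subtype) ∘ₗ
    D.eqv.symm.toLinearMap

lemma sg_apply {p q : ℤ} {x : V} (hx : x ∈ D.K p q) : D.sg x = ((-1 : ℂ) ^ q) • x := by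
  simp only [sg, LinearMap.comp_apply, LinearEquiv.coe_coe, D.eqv_symm p q x hx]
  rw [DirectSum.toModule_lof]
  rfl

lemma d1_mem' {p q : ℤ} {x : V} (hx : x ∈ D.K (p - 1) q) : D.d1 x ∈ D.K p q := by
  have := D.d1_mem _ _ x hx
  simpa using this

lemma d2_mem' {p q : ℤ} {x : V} (hx : x ∈ D.K p (q - 1)) : D.d2 x ∈ D.K p q := by
  have := D.d2_mem _ _ x hx
  simpa using this

lemma pr_d1 (p q : ℤ) (x : V) : D.pr p q (D.d1 x) = D.d1 (D.pr (p - 1) q x) := by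
  have : D.pr p q ∘ₗ D.d1 = D.d1 ∘ₗ D.pr (p - 1) q := by
    apply D.hom_ext
    intro p' q' x hx
    simp only [LinearMap.comp_apply]
    by_cases h : (p', q') = (p - 1, q)
    · obtain ⟨rfl, rfl⟩ := Prod.mk.inj h
      rw [D.pr_self hx, D.pr_self (D.d1_mem' hx)]
    · rw [D.pr_ne hx h, D.pr_ne (D.d1_mem _ _ x hx), map_zero]
      intro h'
      apply h
      simp only [Prod.mk.injEq] at h' ⊢
      omega
  exact LinearMap.congr_fun this x

lemma pr_d2 (p q : ℤ) (x : V) : D.pr p q (D.d2 x) = D.d2 (D.pr p (q - 1) x) := by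
  have : D.pr p q ∘ₗ D.d2 = D.d2 ∘ₗ D.pr p (q - 1) := by
    apply D.hom_ext
    intro p' q' x hx
    simp only [LinearMap.comp_apply]
    by_cases h : (p', q') = (p, q - 1)
    · obtain ⟨rfl, rfl⟩ := Prod.mk.inj h
      rw [D.pr_self hx, D.pr_self (D.d2_mem' hx)]
    · rw [D.pr_ne hx h, D.pr_ne (D.d2_mem _ _ x hx), map_zero]
      intro h'
      apply h
      simp only [Prod.mk.injEq] at h' ⊢
      omega
  exact LinearMap.congr_fun this x

lemma sg_sg (x : V) : D.sg (D.sg x) = x := by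
  have : D.sg ∘ₗ D.sg = LinearMap.id := by
    apply D.hom_ext
    intro p q x hx
    simp only [LinearMap.comp_apply, LinearMap.id_apply]
    rw [D.sg_apply hx, map_smul, D.sg_apply hx, smul_smul, ← mul_zpow]
    simp
  exact LinearMap.congr_fun this x

/-- the other total differential -/
def eT : V →ₗ[ℂ] V := D.d1 - D.d2

lemma sg_dT (x : V) : D.eT (D.sg x) = D.sg (D.dT x) := by
  have : D.eT ∘ₗ D.sg = D.sg ∘ₗ D.dT := by
    apply D.hom_ext
    intro p q x hx
    simp only [LinearMap.comp_apply, dT, LinearMap.add_apply, map_add]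
    rw [D.sg_apply hx, D.sg_apply (D.d1_mem _ _ x hx), D.sg_apply (D.d2_mem _ _ x hx),
      zpow_add₀ (by norm_num), eT]
    simp only [map_smul, LinearMap.sub_apply]
    module
  exact LinearMap.congr_fun this x

/-- the sign automorphism as an equivalence -/
noncomputable def sgE : V ≃ₗ[ℂ] V :=
  LinearEquiv.ofInvolutive D.sg D.sg_sg

@[simp] lemma sgE_apply (x : V) : D.sgE x = D.sg x := rfl

lemma K_le_Tot {p q k : ℤ} (h : p + q = k) : D.K p q ≤ D.Tot k := by
  obtain rfl : q = k - p := by omega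
  exact le_iSup (fun p => D.K p (k - p)) p

lemma Tot_le {k : ℤ} {N : Submodule ℂ V} (h : ∀ p, D.K p (k - p) ≤ N) : D.Tot k ≤ N :=
  iSup_le h

lemma d1_Tot {k : ℤ} {x : V} (hx : x ∈ D.Tot (k - 1)) : D.d1 x ∈ D.Tot k := by
  have : D.Tot (k - 1) ≤ (D.Tot k).comap D.d1 := D.Tot_le fun p x hx =>
    D.K_le_Tot (by omega) (D.d1_mem _ _ x hx)
  exact this hx

lemma d2_Tot {k : ℤ} {x : V} (hx : x ∈ D.Tot (k - 1)) : D.d2 x ∈ D.Tot k := by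
  have : D.Tot (k - 1) ≤ (D.Tot k).comap D.d2 := D.Tot_le fun p x hx =>
    D.K_le_Tot (by omega) (D.d2_mem _ _ x hx)
  exact this hx

lemma sg_Tot {k : ℤ} {x : V} (hx : x ∈ D.Tot k) : D.sg x ∈ D.Tot k := by
  have : D.Tot k ≤ (D.Tot k).comap D.sg := D.Tot_le fun p x hx => by
    simp only [Submodule.mem_comap]
    rw [D.sg_apply hx]
    exact D.K_le_Tot (by omega) (Submodule.smul_mem _ _ hx)
  exact this hx

lemma map_sg_ker (k : ℤ) : (LinearMap.ker D.dT ⊓ D.Tot k).map D.sgE.toLinearMap =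
    LinearMap.ker D.eT ⊓ D.Tot k := by
  ext x
  simp only [Submodule.mem_map, Submodule.mem_inf, LinearMap.mem_ker, LinearEquiv.coe_coe,
    sgE_apply]
  constructor
  · rintro ⟨y, ⟨h1, h2⟩, rfl⟩
    exact ⟨by rw [sg_dT, h1, map_zero], D.sg_Tot h2⟩
  · rintro ⟨h1, h2⟩
    refine ⟨D.sg x, ⟨?_, D.sg_Tot h2⟩, D.sg_sg x⟩
    rw [← D.sg_sg (D.dT _), ← sg_dT, D.sg_sg, h1, map_zero]

lemma map_sg_im (k : ℤ) : ((D.Tot k).map D.dT).map D.sgE.toLinearMap =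
    (D.Tot k).map D.eT := by
  ext x
  simp only [Submodule.mem_map, LinearEquiv.coe_coe, sgE_apply]
  constructor
  · rintro ⟨_, ⟨y, h1, rfl⟩, rfl⟩
    exact ⟨D.sg y, D.sg_Tot h1, D.sg_dT y⟩
  · rintro ⟨y, h1, rfl⟩
    exact ⟨_, ⟨D.sg y, D.sg_Tot h1, rfl⟩, by rw [← sg_dT, sg_sg]⟩

lemma dT_Tot {k : ℤ} {x : V} (hx : x ∈ D.Tot (k - 1)) : D.dT x ∈ D.Tot k :=
  add_mem (D.d1_Tot hx) (D.d2_Tot hx)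

lemma eT_Tot {k : ℤ} {x : V} (hx : x ∈ D.Tot (k - 1)) : D.eT x ∈ D.Tot k :=
  sub_mem (D.d1_Tot hx) (D.d2_Tot hx)

lemma dT_dT (x : V) : D.dT (D.dT x) = 0 := by
  have := D.anticomm_apply x
  simp [dT, D.d1_d1_apply, D.d2_d2_apply, this]

lemma two_b [FiniteDimensional ℂ V] (k : ℤ) : 2 * (D.b k : ℤ) =
    ((Module.finrank ℂ ↥(LinearMap.ker D.dT ⊓ D.Tot k) : ℤ)
      - Module.finrank ℂ ((D.Tot (k - 1)).map D.dT))
    + ((Module.finrank ℂ ↥(LinearMap.ker D.eT ⊓ D.Tot k) : ℤ)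
      - Module.finrank ℂ ((D.Tot (k - 1)).map D.eT)) := by
  rw [← D.map_sg_ker, ← D.map_sg_im, LinearEquiv.finrank_map_eq, LinearEquiv.finrank_map_eq,
    b, qdim_eq]
  · rw [dRN, dRD]; ring
  · rintro _ ⟨x, hx, rfl⟩
    exact ⟨D.dT_dT x, D.dT_Tot hx⟩

/-- finite set of relevant indices -/
noncomputable def idx (hb : D.Bounded) : Finset ℤ := hb.toFinset.image Prod.fst

lemma K_eq_bot (hb : D.Bounded) {p : ℤ} (q : ℤ) (hp : p ∉ D.idx hb) : D.K p q = ⊥ := by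
  by_contra h
  apply hp
  simp only [idx, Finset.mem_image]
  exact ⟨(p, q), (Set.Finite.mem_toFinset hb).2 h, rfl⟩

lemma sum_pr (hb : D.Bounded) {k : ℤ} {x : V} (hx : x ∈ D.Tot k) :
    ∑ p ∈ D.idx hb, D.pr p (k - p) x = x := by
  have : D.Tot k ≤ LinearMap.eqLocus (∑ p ∈ D.idx hb, D.pr p (k - p)) LinearMap.id :=
    D.Tot_le fun p x hx => by
      simp only [LinearMap.mem_eqLocus, LinearMap.sum_apply, LinearMap.id_apply]
      rw [Finset.sum_eq_single p, D.pr_self hx]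
      · intro b _ hb
        apply D.pr_ne hx
        intro h
        exact hb (Prod.mk.inj h).1.symm
      · intro hp
        rw [D.K_eq_bot hb _ hp] at hx
        rw [(Submodule.mem_bot ℂ).1 hx, map_zero]
  simpa using this hx

lemma finrank_iSup_eq [FiniteDimensional ℂ V] (hb : D.Bounded) (k : ℤ) (N : ℤ → Submodule ℂ V)
    (hN : ∀ p, N p ≤ D.K p (k - p)) :
    Module.finrank ℂ ↥(⨆ p, N p) = ∑ p ∈ D.idx hb, Module.finrank ℂ (N p) := by
  have hind : iSupIndep N := by
    have h1 : iSupIndep fun p : ℤ => D.K p (k - p) :=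
      D.isInternal.submodule_iSupIndep.comp (f := fun p : ℤ => ((p, k - p) : ℤ × ℤ))
        (fun a b h => (Prod.mk.inj h).1)
    exact h1.mono hN
  have hsup : ⨆ p, N p = (D.idx hb).sup N := by
    apply le_antisymm
    · apply iSup_le
      intro p
      by_cases hp : p ∈ D.idx hb
      · exact Finset.le_sup hp
      · have := hN p
        rw [D.K_eq_bot hb _ hp] at this
        exact this.trans bot_le
    · exact Finset.sup_le fun p _ => le_iSup N p
  rw [hsup]
  generalize D.idx hb = S
  induction S using Finset.induction_on with
  | empty => simp
  | insert a s ha ih =>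
    rw [Finset.sup_insert, Finset.sum_insert ha, ← ih]
    have hd : Disjoint (N a) (s.sup N) :=
      hind.supIndep' (insert a s) (Finset.subset_insert a s) (Finset.mem_insert_self a s) ha
    have := Submodule.finrank_sup_add_finrank_inf_eq (N a) (s.sup N)
    rw [hd.eq_bot, finrank_bot] at this
    omega

lemma iSup_inf_eq (hb : D.Bounded) {k : ℤ} (N : Submodule ℂ V)
    (h : ∀ x ∈ N, ∀ p, D.pr p (k - p) x ∈ N) :
    ⨆ p, N ⊓ D.K p (k - p) = N ⊓ D.Tot k := by
  apply le_antisymm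
  · exact iSup_le fun p => inf_le_inf le_rfl (D.K_le_Tot (by omega))
  · rintro x ⟨hx, hT⟩
    rw [← D.sum_pr hb hT]
    exact Submodule.sum_mem _ fun p _ => (le_iSup (fun p => N ⊓ D.K p (k - p)) p)
      ⟨h x hx p, D.pr_mem _ _ _⟩

lemma iSup_bcN (hb : D.Bounded) (k : ℤ) :
    ⨆ p, D.bcN p (k - p) = LinearMap.ker D.d1 ⊓ LinearMap.ker D.d2 ⊓ D.Tot k := by
  refine D.iSup_inf_eq hb _ ?_
  rintro x ⟨h1, h2⟩ p
  rw [SetLike.mem_coe, LinearMap.mem_ker] at h1 h2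
  have e1 := D.pr_d1 (p + 1) (k - p) x
  have e2 := D.pr_d2 p (k - p + 1) x
  simp only [h1, h2, map_zero, add_sub_cancel_right] at e1 e2
  exact ⟨e1.symm, e2.symm⟩

lemma iSup_aeN (hb : D.Bounded) (k : ℤ) :
    ⨆ p, D.aeN p (k - p) = LinearMap.ker (D.d1 ∘ₗ D.d2) ⊓ D.Tot k := by
  refine D.iSup_inf_eq hb _ ?_
  intro x h1 p
  simp only [LinearMap.mem_ker, LinearMap.comp_apply] at h1 ⊢
  have e1 := D.pr_d1 (p + 1) (k - p + 1) (D.d2 x)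
  rw [pr_d2] at e1
  simp only [h1, map_zero, add_sub_cancel_right] at e1
  exact e1.symm

lemma iSup_conjD (k : ℤ) : ⨆ p, D.conjD p (k - p) = (D.Tot (k - 1)).map D.d1 := by
  simp only [conjD, Tot, ← Submodule.map_iSup]
  congr 1
  rw [← (Equiv.subRight (1 : ℤ)).iSup_comp (g := fun p => D.K p (k - 1 - p))]
  refine iSup_congr fun p => ?_
  rw [Equiv.subRight_apply, show k - 1 - (p - 1) = k - p by ring]

lemma iSup_dolD (k : ℤ) : ⨆ p, D.dolD p (k - p) = (D.Tot (k - 1)).map D.d2 := by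
  simp only [dolD, Tot, ← Submodule.map_iSup]
  congr 1
  exact iSup_congr fun p => by rw [sub_right_comm]

lemma iSup_bcD (k : ℤ) :
    ⨆ p, D.bcD p (k - p) = (D.Tot (k - 2)).map (D.d1 ∘ₗ D.d2) := by
  simp only [bcD, Tot, ← Submodule.map_iSup]
  congr 1
  rw [← (Equiv.subRight (1 : ℤ)).iSup_comp (g := fun p => D.K p (k - 2 - p))]
  refine iSup_congr fun p => ?_
  rw [Equiv.subRight_apply, show k - 2 - (p - 1) = k - p - 1 by ring]

lemma iSup_aeD (k : ℤ) :
    ⨆ p, D.aeD p (k - p) = (D.Tot (k - 1)).map D.d1 ⊔ (D.Tot (k - 1)).map D.d2 := by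
  rw [← iSup_conjD, ← iSup_dolD, ← iSup_sup_eq]
  rfl

lemma d2_d1 (x : V) : D.d2 (D.d1 x) = - D.d1 (D.d2 x) := by
  have := D.anticomm_apply x
  exact eq_neg_of_add_eq_zero_right this

lemma bcD_le (p q : ℤ) : D.bcD p q ≤ D.bcN p q := by
  rintro _ ⟨x, hx, rfl⟩
  refine ⟨⟨?_, ?_⟩, ?_⟩
  · simp [d1_d1_apply]
  · simp [d2_d1, d2_d2_apply]
  · exact D.d1_mem' (D.d2_mem' hx)

lemma aeD_le (p q : ℤ) : D.aeD p q ≤ D.aeN p q := by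
  refine sup_le ?_ ?_
  · rintro _ ⟨x, hx, rfl⟩
    exact ⟨by simp [d2_d1, d1_d1_apply], D.d1_mem' hx⟩
  · rintro _ ⟨x, hx, rfl⟩
    exact ⟨by simp [d2_d2_apply], D.d2_mem' hx⟩

lemma sum_h [FiniteDimensional ℂ V] (hb : D.Bounded) (k : ℤ) :
    (∑ᶠ p : ℤ, ((D.hBC p (k - p) : ℤ) + (D.hAe p (k - p) : ℤ))) =
    ((Module.finrank ℂ ↥(LinearMap.ker D.d1 ⊓ LinearMap.ker D.d2 ⊓ D.Tot k) : ℤ)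
      - Module.finrank ℂ ((D.Tot (k - 2)).map (D.d1 ∘ₗ D.d2)))
    + ((Module.finrank ℂ ↥(LinearMap.ker (D.d1 ∘ₗ D.d2) ⊓ D.Tot k) : ℤ)
      - Module.finrank ℂ ↥((D.Tot (k - 1)).map D.d1 ⊔ (D.Tot (k - 1)).map D.d2)) := by
  rw [← D.iSup_bcN hb, ← D.iSup_aeN hb, ← iSup_bcD, ← iSup_aeD]
  rw [D.finrank_iSup_eq hb k (fun p => D.bcN p (k - p)) fun p => inf_le_right,
    D.finrank_iSup_eq hb k (fun p => D.aeN p (k - p)) fun p => inf_le_right,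
    D.finrank_iSup_eq hb k _ fun p => (D.bcD_le p _).trans inf_le_right,
    D.finrank_iSup_eq hb k _ fun p => (D.aeD_le p _).trans inf_le_right]
  push_cast
  rw [← Finset.sum_sub_distrib, ← Finset.sum_sub_distrib, ← Finset.sum_add_distrib]
  have key : ∀ p, ((D.hBC p (k - p) : ℤ) + (D.hAe p (k - p) : ℤ)) =
      ((Module.finrank ℂ (D.bcN p (k - p)) : ℤ) - Module.finrank ℂ (D.bcD p (k - p)))
      + ((Module.finrank ℂ (D.aeN p (k - p)) : ℤ) - Module.finrank ℂ (D.aeD p (k - p))) := by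
    intro p
    rw [hBC, hAe, qdim_eq (D.bcD_le _ _), qdim_eq (D.aeD_le _ _)]
  rw [finsum_eq_sum_of_support_subset (s := D.idx hb)]
  · exact Finset.sum_congr rfl fun p _ => key p
  · intro p hp
    by_contra hn
    apply hp
    have h0 : ∀ N : Submodule ℂ V, N ≤ D.K p (k - p) → Module.finrank ℂ N = 0 := by
      intro N hN
      rw [D.K_eq_bot hb _ hn, le_bot_iff] at hN
      rw [hN, finrank_bot]
    dsimp only
    rw [key, h0 (D.bcN _ _) inf_le_right, h0 (D.aeN _ _) inf_le_right, h0 _ ((D.bcD_le p _).trans inf_le_right),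
      h0 _ ((D.aeD_le p _).trans inf_le_right)]
    simp

lemma ker_inf (k : ℤ) : LinearMap.ker D.d1 ⊓ LinearMap.ker D.d2 ⊓ D.Tot k =
    (LinearMap.ker D.dT ⊓ D.Tot k) ⊓ (LinearMap.ker D.eT ⊓ D.Tot k) := by
  ext x
  simp only [Submodule.mem_inf, LinearMap.mem_ker, dT, eT, LinearMap.add_apply,
    LinearMap.sub_apply]
  constructor
  · rintro ⟨⟨h1, h2⟩, h3⟩
    simp [h1, h2, h3]
  · rintro ⟨⟨h1, h3⟩, h2, -⟩
    refine ⟨⟨?_, ?_⟩, h3⟩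
    · have : D.d1 x = (1 / 2 : ℂ) • ((D.d1 x + D.d2 x) + (D.d1 x - D.d2 x)) := by module
      rw [this, h1, h2]; simp
    · have : D.d2 x = (1 / 2 : ℂ) • ((D.d1 x + D.d2 x) - (D.d1 x - D.d2 x)) := by module
      rw [this, h1, h2]; simp

lemma im_sup (T : Submodule ℂ V) : T.map D.d1 ⊔ T.map D.d2 = T.map D.dT ⊔ T.map D.eT := by
  apply le_antisymm
  · refine sup_le ?_ ?_
    · rintro _ ⟨x, hx, rfl⟩
      have : D.d1 x = D.dT ((1 / 2 : ℂ) • x) + D.eT ((1 / 2 : ℂ) • x) := by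
        simp only [dT, eT, LinearMap.add_apply, LinearMap.sub_apply, map_smul]; module
      rw [this]
      exact Submodule.add_mem_sup ⟨_, T.smul_mem _ hx, rfl⟩ ⟨_, T.smul_mem _ hx, rfl⟩
    · rintro _ ⟨x, hx, rfl⟩
      have : D.d2 x = D.dT ((1 / 2 : ℂ) • x) + D.eT ((-(1 / 2) : ℂ) • x) := by
        simp only [dT, eT, LinearMap.add_apply, LinearMap.sub_apply, map_smul]; module
      rw [this]
      exact Submodule.add_mem_sup ⟨_, T.smul_mem _ hx, rfl⟩ ⟨_, T.smul_mem _ hx, rfl⟩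
  · refine sup_le ?_ ?_
    · rintro _ ⟨x, hx, rfl⟩
      exact Submodule.add_mem_sup ⟨_, hx, rfl⟩ ⟨_, hx, rfl⟩
    · rintro _ ⟨x, hx, rfl⟩
      have : D.eT x = D.d1 x + D.d2 (-x) := by simp [eT, sub_eq_add_neg]
      rw [this]
      exact Submodule.add_mem_sup ⟨_, hx, rfl⟩ ⟨_, T.neg_mem hx, rfl⟩

lemma eT_dT (y : V) : D.eT (D.dT y) = (2 : ℂ) • D.d1 (D.d2 y) := by
  simp only [eT, dT, LinearMap.add_apply, LinearMap.sub_apply, map_add, d1_d1_apply,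
    d2_d2_apply, d2_d1]
  module

lemma dT_eT (y : V) : D.dT (D.eT y) = -(2 : ℂ) • D.d1 (D.d2 y) := by
  simp only [eT, dT, LinearMap.add_apply, LinearMap.sub_apply, map_sub, d1_d1_apply,
    d2_d2_apply, d2_d1]
  module

lemma le_A (k : ℤ) : (D.Tot (k - 2)).map (D.d1 ∘ₗ D.d2) ≤
    (D.Tot (k - 1)).map D.dT ⊓ (D.Tot (k - 1)).map D.eT := by
  rintro _ ⟨x, hx, rfl⟩
  have hx' : x ∈ D.Tot (k - 1 - 1) := by
    rwa [show k - 1 - 1 = k - 2 by ring]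
  refine ⟨⟨(-(1 / 2) : ℂ) • D.eT x, Submodule.smul_mem _ _ (D.eT_Tot hx'), ?_⟩,
    ⟨((1 / 2) : ℂ) • D.dT x, Submodule.smul_mem _ _ (D.dT_Tot hx'), ?_⟩⟩
  · rw [map_smul, dT_eT, LinearMap.comp_apply]; module
  · rw [map_smul, eT_dT, LinearMap.comp_apply]; module

lemma le_F (k : ℤ) : (LinearMap.ker D.dT ⊓ D.Tot k) ⊔ (LinearMap.ker D.eT ⊓ D.Tot k) ≤
    LinearMap.ker (D.d1 ∘ₗ D.d2) ⊓ D.Tot k := by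
  refine sup_le ?_ ?_
  · rintro x ⟨h, hT⟩
    refine ⟨?_, hT⟩
    have := D.eT_dT x
    rw [LinearMap.mem_ker.1 h, map_zero] at this
    simpa using this.symm
  · rintro x ⟨h, hT⟩
    refine ⟨?_, hT⟩
    have := D.dT_eT x
    rw [LinearMap.mem_ker.1 h, map_zero] at this
    simpa using this

lemma delta_iff [FiniteDimensional ℂ V] (hb : D.Bounded) (k : ℤ) :
    (∑ᶠ p : ℤ, ((D.hBC p (k - p) : ℤ) + (D.hAe p (k - p) : ℤ))) - 2 * (D.b k : ℤ) = 0 ↔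
    ((D.Tot (k - 1)).map D.dT ⊓ (D.Tot (k - 1)).map D.eT ≤ (D.Tot (k - 2)).map (D.d1 ∘ₗ D.d2)
    ∧ LinearMap.ker (D.d1 ∘ₗ D.d2) ⊓ D.Tot k ≤
      (LinearMap.ker D.dT ⊓ D.Tot k) ⊔ (LinearMap.ker D.eT ⊓ D.Tot k)) := by
  rw [D.sum_h hb, two_b, ker_inf, im_sup]
  have h1 := Submodule.finrank_sup_add_finrank_inf_eq (LinearMap.ker D.dT ⊓ D.Tot k)
    (LinearMap.ker D.eT ⊓ D.Tot k)
  have h2 := Submodule.finrank_sup_add_finrank_inf_eq ((D.Tot (k - 1)).map D.dT)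
    ((D.Tot (k - 1)).map D.eT)
  have h3 := Submodule.finrank_mono (D.le_A k)
  have h4 := Submodule.finrank_mono (D.le_F k)
  constructor
  · intro h
    constructor
    · exact (Submodule.eq_of_le_of_finrank_eq (D.le_A k) (by omega)).ge
    · exact (Submodule.eq_of_le_of_finrank_eq (D.le_F k) (by omega)).ge
  · rintro ⟨h5, h6⟩
    have h5 := Submodule.finrank_mono h5
    have h6 := Submodule.finrank_mono h6
    omega

lemma total_L (hb : D.Bounded) (hL : D.SatisfiesDdbarLemma) {k : ℤ} {z : V}
    (h1 : D.d1 z = 0) (h2 : D.d2 z = 0)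
    (h : z ∈ (D.Tot (k - 1)).map D.d1 ⊔ (D.Tot (k - 1)).map D.d2) :
    z ∈ (D.Tot (k - 2)).map (D.d1 ∘ₗ D.d2) := by
  obtain ⟨_, ⟨x, hx, rfl⟩, _, ⟨y, hy, rfl⟩, rfl⟩ := Submodule.mem_sup.1 h
  have hT := add_mem (D.d1_Tot hx) (D.d2_Tot hy)
  have hz : D.d1 x + D.d2 y ∈ ⨆ p, D.bcN p (k - p) := by
    rw [D.iSup_bcN hb]; exact ⟨⟨h1, h2⟩, hT⟩
  rw [← iSup_bcD, ← D.sum_pr hb hT]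
  refine Submodule.sum_mem _ fun p _ => le_iSup (fun p => D.bcD p (k - p)) p ?_
  rw [← hL p (k - p)]
  refine ⟨⟨⟨?_, ?_⟩, ?_⟩, D.pr_mem _ _ _⟩
  · have e1 := D.pr_d1 (p + 1) (k - p) (D.d1 x + D.d2 y)
    rw [h1] at e1
    simp only [map_zero, add_sub_cancel_right] at e1
    exact e1.symm
  · have e1 := D.pr_d2 p (k - p + 1) (D.d1 x + D.d2 y)
    rw [h2] at e1
    simp only [map_zero, add_sub_cancel_right] at e1
    exact e1.symm
  · rw [map_add, pr_d1, pr_d2]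
    exact Submodule.add_mem_sup ⟨_, D.pr_mem _ _ _, rfl⟩ ⟨_, D.pr_mem _ _ _, rfl⟩

lemma fwd (hb : D.Bounded) (hL : D.SatisfiesDdbarLemma) (k : ℤ) :
    ((D.Tot (k - 1)).map D.dT ⊓ (D.Tot (k - 1)).map D.eT ≤ (D.Tot (k - 2)).map (D.d1 ∘ₗ D.d2)
    ∧ LinearMap.ker (D.d1 ∘ₗ D.d2) ⊓ D.Tot k ≤
      (LinearMap.ker D.dT ⊓ D.Tot k) ⊔ (LinearMap.ker D.eT ⊓ D.Tot k)) := by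
  constructor
  · rintro z ⟨⟨x, hx, rfl⟩, ⟨y, hy, hxy⟩⟩
    have hd : D.d1 (D.dT x) = D.d1 (D.d2 x) := by simp [dT, d1_d1_apply]
    have he : D.d1 (D.eT y) = - D.d1 (D.d2 y) := by simp [eT, d1_d1_apply]
    have hxx : D.dT (D.dT x) = 0 := D.dT_dT x
    have hyy : D.eT (D.eT y) = 0 := by simp [eT, d1_d1_apply, d2_d2_apply, d2_d1]
    rw [hxy] at hyy
    have hz : D.d1 (D.dT x) = 0 ∧ D.d2 (D.dT x) = 0 := by
      have a1 : D.d1 (D.dT x) + D.d2 (D.dT x) = 0 := hxx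
      have a2 : D.d1 (D.dT x) - D.d2 (D.dT x) = 0 := hyy
      constructor
      · have : D.d1 (D.dT x) = (1 / 2 : ℂ) • ((D.d1 (D.dT x) + D.d2 (D.dT x)) +
          (D.d1 (D.dT x) - D.d2 (D.dT x))) := by module
        rw [this, a1, a2]; simp
      · have : D.d2 (D.dT x) = (1 / 2 : ℂ) • ((D.d1 (D.dT x) + D.d2 (D.dT x)) -
          (D.d1 (D.dT x) - D.d2 (D.dT x))) := by module
        rw [this, a1, a2]; simp
    refine D.total_L hb hL hz.1 hz.2 ?_
    rw [im_sup]
    exact Submodule.mem_sup_left ⟨x, hx, rfl⟩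
  · rintro x ⟨h, hT⟩
    have h : D.d1 (D.d2 x) = 0 := h
    have hT1 : x ∈ D.Tot (k + 1 - 1) := by simpa using hT
    have hm : D.eT x ∈ (D.Tot (k + 1 - 2)).map (D.d1 ∘ₗ D.d2) := by
      apply D.total_L hb hL
      · simp [eT, d1_d1_apply, h]
      · simp [eT, d2_d2_apply, d2_d1, h]
      · rw [im_sup]
        exact Submodule.mem_sup_right ⟨x, hT1, rfl⟩
    obtain ⟨y, hy, hxy⟩ := hm
    rw [show k + 1 - 2 = k - 1 by ring] at hy
    have hu : D.dT ((1 / 2 : ℂ) • y) ∈ D.Tot k := D.dT_Tot (Submodule.smul_mem _ _ hy)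
    have : x = D.dT ((1 / 2 : ℂ) • y) + (x - D.dT ((1 / 2 : ℂ) • y)) := by abel
    rw [this]
    refine Submodule.add_mem_sup ⟨D.dT_dT _, hu⟩ ⟨?_, sub_mem hT hu⟩
    rw [SetLike.mem_coe, LinearMap.mem_ker, map_sub, ← hxy, eT_dT, LinearMap.comp_apply, map_smul,
      map_smul]
    module

lemma half_zero {x : V} (h : x = -x) : x = 0 := by
  have : x = (1 / 2 : ℂ) • (x + x) := by module
  rw [this]
  nth_rewrite 1 [h]
  simp

/-- The two components of the decomposition `ker ∂∂̄ = ker d + ker d'`. -/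
lemma split {k : ℤ} (hF : LinearMap.ker (D.d1 ∘ₗ D.d2) ⊓ D.Tot k ≤
      (LinearMap.ker D.dT ⊓ D.Tot k) ⊔ (LinearMap.ker D.eT ⊓ D.Tot k)) {x : V}
    (hT : x ∈ D.Tot k) (h : D.d1 (D.d2 x) = 0) :
    ∃ u v, x = u + v ∧ D.d1 u = - D.d2 u ∧ D.d1 v = D.d2 v := by
  obtain ⟨u, hu, v, hv, huv⟩ := Submodule.mem_sup.1 (hF ⟨h, hT⟩)
  exact ⟨u, v, huv.symm, eq_neg_of_add_eq_zero_left hu.1, sub_eq_zero.1 hv.1⟩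

lemma comp_bcD (p q : ℤ) {z : V} (hz : z ∈ D.K p q)
    (h : z ∈ (D.Tot (p + q - 2)).map (D.d1 ∘ₗ D.d2)) : z ∈ D.bcD p q := by
  obtain ⟨y, -, hy⟩ := h
  refine ⟨D.pr (p - 1) (q - 1) y, D.pr_mem _ _ _, ?_⟩
  rw [LinearMap.comp_apply, ← pr_d2, ← pr_d1]
  rw [LinearMap.comp_apply] at hy
  rw [hy, D.pr_self hz]

lemma bwd (H : ∀ k : ℤ,
    ((D.Tot (k - 1)).map D.dT ⊓ (D.Tot (k - 1)).map D.eT ≤ (D.Tot (k - 2)).map (D.d1 ∘ₗ D.d2)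
    ∧ LinearMap.ker (D.d1 ∘ₗ D.d2) ⊓ D.Tot k ≤
      (LinearMap.ker D.dT ⊓ D.Tot k) ⊔ (LinearMap.ker D.eT ⊓ D.Tot k))) :
    D.SatisfiesDdbarLemma := by
  intro p q
  apply le_antisymm
  · rintro _ ⟨⟨⟨h1, h2⟩, h3⟩, -⟩
    obtain ⟨_, ⟨x, hx, rfl⟩, _, ⟨y, hy, rfl⟩, rfl⟩ := Submodule.mem_sup.1 h3
    rw [SetLike.mem_coe, LinearMap.mem_ker, map_add] at h1 h2
    rw [d1_d1_apply, zero_add] at h1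
    rw [d2_d2_apply, d2_d1, add_zero, neg_eq_zero] at h2
    apply add_mem
    · obtain ⟨u, v, huv, hu, hv⟩ := D.split (H (p + q - 1)).2 (D.K_le_Tot (by omega) hx) h2
      apply D.comp_bcD _ _ (D.d1_mem' hx)
      apply (H (p + q)).1
      have hv0 : D.pr p (q - 1) u = - D.pr p (q - 1) v := by
        apply eq_neg_of_add_eq_zero_left
        rw [← map_add, ← huv]
        exact D.pr_ne hx (by simp)
      have hv1 : D.pr (p + 1) (q - 1 - 1) u = - D.pr (p + 1) (q - 1 - 1) v := by
        apply eq_neg_of_add_eq_zero_left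
        rw [← map_add, ← huv]
        exact D.pr_ne hx (by simp; omega)
      have a1 := congrArg (D.pr p q) hu
      have a2 := congrArg (D.pr p q) hv
      have a3 := congrArg (D.pr (p + 1) (q - 1)) hu
      have a4 := congrArg (D.pr (p + 1) (q - 1)) hv
      simp only [map_neg, pr_d1, pr_d2, add_sub_cancel_right, hv0, hv1] at a1 a2 a3 a4
      have hw : D.d1 (D.pr p (q - 1) v) = 0 := by
        apply half_zero
        rw [a3, a4]; simp
      have hz : D.d1 x = (2 : ℂ) • D.d2 (D.pr p (q - 1) v) := by
        rw [← D.pr_self (D.d1_mem' hx), pr_d1, huv, map_add, map_add, a1, a2]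
        module
      have hm : D.pr p (q - 1) v ∈ D.Tot (p + q - 1) := D.K_le_Tot (by omega) (D.pr_mem _ _ _)
      refine ⟨⟨(2 : ℂ) • D.pr p (q - 1) v, Submodule.smul_mem _ _ hm, ?_⟩,
        ⟨(-2 : ℂ) • D.pr p (q - 1) v, Submodule.smul_mem _ _ hm, ?_⟩⟩
      · simp [dT, hw, hz]
      · simp [eT, hw, hz]
    · obtain ⟨u, v, huv, hu, hv⟩ := D.split (H (p + q - 1)).2 (D.K_le_Tot (by omega) hy) h1
      apply D.comp_bcD _ _ (D.d2_mem' hy)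
      apply (H (p + q)).1
      have hv0 : D.pr (p - 1) q u = - D.pr (p - 1) q v := by
        apply eq_neg_of_add_eq_zero_left
        rw [← map_add, ← huv]
        exact D.pr_ne hy (by simp)
      have hv1 : D.pr (p - 1 - 1) (q + 1) u = - D.pr (p - 1 - 1) (q + 1) v := by
        apply eq_neg_of_add_eq_zero_left
        rw [← map_add, ← huv]
        exact D.pr_ne hy (by simp; omega)
      have a1 := congrArg (D.pr p q) hu
      have a2 := congrArg (D.pr p q) hv
      have a3 := congrArg (D.pr (p - 1) (q + 1)) hu
      have a4 := congrArg (D.pr (p - 1) (q + 1)) hv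
      simp only [map_neg, pr_d1, pr_d2, add_sub_cancel_right, hv0, hv1, neg_neg, neg_inj]
        at a1 a2 a3 a4
      have hw : D.d2 (D.pr (p - 1) q v) = 0 := by
        apply half_zero
        nth_rewrite 1 [← a4]
        rw [← a3]; simp
      have hz : D.d2 y = (2 : ℂ) • D.d1 (D.pr (p - 1) q v) := by
        rw [← D.pr_self (D.d2_mem' hy), pr_d2, huv, map_add, map_add, ← a1, ← a2]
        module
      have hm : D.pr (p - 1) q v ∈ D.Tot (p + q - 1) := D.K_le_Tot (by omega) (D.pr_mem _ _ _)
      refine ⟨⟨(2 : ℂ) • D.pr (p - 1) q v, Submodule.smul_mem _ _ hm, ?_⟩,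
        ⟨(2 : ℂ) • D.pr (p - 1) q v, Submodule.smul_mem _ _ hm, ?_⟩⟩
      · simp [dT, hw, hz]
      · simp [eT, hw, hz]
  · intro z hz
    have h := D.bcD_le p q hz
    refine ⟨⟨h.1, ?_⟩, h.2⟩
    obtain ⟨x, hx, rfl⟩ := hz
    exact Submodule.mem_sup_left ⟨D.d2 x, D.d2_mem' hx, rfl⟩

end DoubleComplex

open DoubleComplex in
/-- A bounded double complex of finite-dimensional complex vector spaces satisfies the
`∂∂̄`-lemma if and only if `Δ_k := Σ_{p+q=k} (h_BC^{p,q} + h_A^{p,q}) − 2 b_k = 0`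
for every `k`. -/
theorem ddbar_iff_delta_eq_zero {V : Type*} [AddCommGroup V] [Module ℂ V]
    [FiniteDimensional ℂ V] (D : DoubleComplex V) (hb : D.Bounded) :
    D.SatisfiesDdbarLemma ↔
      ∀ k : ℤ,
        (∑ᶠ p : ℤ, ((D.hBC p (k - p) : ℤ) + (D.hAe p (k - p) : ℤ))) - 2 * (D.b k : ℤ) = 0 := by
  exact ⟨fun h k => (D.delta_iff hb k).2 (D.fwd hb h k),
    fun h => D.bwd fun k => (D.delta_iff hb k).1 (h k)⟩
end

section
/- Under the dd^c-lemma hypothesis, every d-closed element is d-cohomologous to a d^c-closed element: ker d ⊆ (ker d ∩ ker d^c) + im d. Consequently, the inclusion (ker d^c, d) → (V, d) induces a surjection in d-cohomology. -/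
open Submodule

/-- The `dd^c`-lemma hypothesis: `im d ∩ ker d^c ⊆ im (d ∘ d^c)` and
`ker d ∩ im d^c ⊆ im (d ∘ d^c)`. -/
def DdcLemma {V : Type*} [AddCommGroup V] [Module ℂ V] (d dc : V →ₗ[ℂ] V) : Prop :=
  LinearMap.range d ⊓ LinearMap.ker dc ≤ LinearMap.range (d ∘ₗ dc) ∧
  LinearMap.ker d ⊓ LinearMap.range dc ≤ LinearMap.range (d ∘ₗ dc)

/-- The map in `d`-cohomology induced by the inclusion of the complex `(ker d^c, d)`
into `(V, d)`: from `H(ker d^c, d) = (ker d ∩ ker d^c)/d(ker d^c)` to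
`H_dR = ker d / im d`. -/
def inclCohMap {V : Type*} [AddCommGroup V] [Module ℂ V] (d dc : V →ₗ[ℂ] V) :
    (↥(LinearMap.ker d ⊓ LinearMap.ker dc) ⧸
        ((LinearMap.ker dc).map d).comap (LinearMap.ker d ⊓ LinearMap.ker dc).subtype)
      →ₗ[ℂ]
    (↥(LinearMap.ker d) ⧸ (LinearMap.range d).comap (LinearMap.ker d).subtype) :=
  quotMap inf_le_left LinearMap.map_le_range

/-- Under the `dd^c`-lemma, every `d`-closed element is `d`-cohomologous to a
`d^c`-closed element; consequently the inclusion `(ker d^c, d) → (V, d)` induces a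
surjection in `d`-cohomology. -/
theorem ddc_incl_surjective {V : Type*} [AddCommGroup V] [Module ℂ V]
    (d dc : V →ₗ[ℂ] V) (hd : d ∘ₗ d = 0) (hdc : dc ∘ₗ dc = 0)
    (hanti : d ∘ₗ dc + dc ∘ₗ d = 0) (hlem : DdcLemma d dc) :
    LinearMap.ker d ≤ (LinearMap.ker d ⊓ LinearMap.ker dc) ⊔ LinearMap.range d ∧
    Function.Surjective (inclCohMap d dc) := by
  have key : ∀ x, d x = 0 → ∃ y, d (x + d y) = 0 ∧ dc (x + d y) = 0 := by
    intro x hx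
    have h1 : ∀ v, d (dc v) + dc (d v) = 0 := fun v => by
      simpa using LinearMap.congr_fun hanti v
    have h2 : ∀ v, d (d v) = 0 := fun v => by
      simpa using LinearMap.congr_fun hd v
    have h3 : d (dc x) = 0 := by
      have := h1 x
      rwa [hx, map_zero, add_zero] at this
    obtain ⟨y, hy⟩ := hlem.2 ⟨LinearMap.mem_ker.2 h3, ⟨x, rfl⟩⟩
    refine ⟨y, ?_, ?_⟩
    · rw [map_add, hx, h2, add_zero]
    · rw [map_add, ← hy]
      exact h1 y
  constructor
  · intro x hx
    obtain ⟨y, hy1, hy2⟩ := key x hx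
    exact Submodule.mem_sup.2 ⟨x + d y, ⟨hy1, hy2⟩, -d y, ⟨-y, map_neg d y⟩, by abel⟩
  · intro q
    obtain ⟨⟨x, hx⟩, rfl⟩ := Submodule.Quotient.mk_surjective _ q
    obtain ⟨y, hy1, hy2⟩ := key x hx
    refine ⟨Submodule.Quotient.mk ⟨x + d y, ⟨hy1, hy2⟩⟩, ?_⟩
    refine (Submodule.Quotient.eq _).2 ?_
    refine ⟨y, ?_⟩
    change d y = (x + d y) - x
    abel
end

section
/- Under the dd^c-lemma hypothesis, every d^c-closed element that is d-exact is the d-image of a d^c-closed element: im d ∩ ker d^c ⊆ d(ker d^c). Consequently, the inclusion (ker d^c, d) → (V, d) induces an injection in d-cohomology. -/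
open Submodule

/-- Under the `dd^c`-lemma, every `d^c`-closed `d`-exact element is the `d`-image of a
`d^c`-closed element; consequently the inclusion `(ker d^c, d) → (V, d)` induces an
injection in `d`-cohomology. -/
theorem ddc_incl_injective {V : Type*} [AddCommGroup V] [Module ℂ V]
    (d dc : V →ₗ[ℂ] V) (hd : d ∘ₗ d = 0) (hdc : dc ∘ₗ dc = 0)
    (hanti : d ∘ₗ dc + dc ∘ₗ d = 0) (hlem : DdcLemma d dc) :
    LinearMap.range d ⊓ LinearMap.ker dc ≤ (LinearMap.ker dc).map d ∧
    Function.Injective (inclCohMap d dc) := by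
  have key : LinearMap.range d ⊓ LinearMap.ker dc ≤ (LinearMap.ker dc).map d := by
    intro x hx
    obtain ⟨y, rfl⟩ := hlem.1 hx
    exact ⟨dc y, LinearMap.congr_fun hdc y, rfl⟩
  refine ⟨key, ?_⟩
  rw [injective_iff_map_eq_zero]
  intro a ha
  obtain ⟨⟨x, hx⟩, rfl⟩ := Submodule.Quotient.mk_surjective _ a
  have h0 : (Submodule.Quotient.mk (⟨x, hx.1⟩ : LinearMap.ker d) :
      ↥(LinearMap.ker d) ⧸ (LinearMap.range d).comap (LinearMap.ker d).subtype) = 0 := ha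
  have h1 : x ∈ LinearMap.range d := by
    rw [Submodule.Quotient.mk_eq_zero] at h0
    exact h0
  rw [Submodule.Quotient.mk_eq_zero]
  exact key ⟨h1, hx.2⟩
end

section
/- Under the dd^c-lemma hypothesis, one has ker d^c ⊆ (ker d ∩ ker d^c) + im d^c and ker d ∩ im d^c ⊆ d(ker d^c). Consequently, the natural projection (ker d^c, d) → (H_{d^c}, 0), where H_{d^c} = ker d^c / im d^c, induces a bijection in cohomology. -/
open Submodule

/-- Under the `dd^c`-lemma, `ker d^c ⊆ (ker d ∩ ker d^c) + im d^c` and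
`ker d ∩ im d^c ⊆ d(ker d^c)`; consequently the natural projection
`(ker d^c, d) → (H_{d^c}, 0)` induces a bijection in cohomology,
`(ker d ∩ ker d^c)/d(ker d^c) ≃ ker d^c / im d^c`, given on classes of
representatives by the identity. -/
theorem ddc_projection_quasi_iso {V : Type*} [AddCommGroup V] [Module ℂ V]
    (d dc : V →ₗ[ℂ] V) (hd : d ∘ₗ d = 0) (hdc : dc ∘ₗ dc = 0)
    (hanti : d ∘ₗ dc + dc ∘ₗ d = 0) (hlem : DdcLemma d dc) :
    LinearMap.ker dc ≤ (LinearMap.ker d ⊓ LinearMap.ker dc) ⊔ LinearMap.range dc ∧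
    LinearMap.ker d ⊓ LinearMap.range dc ≤ (LinearMap.ker dc).map d ∧
    ∃ e : (↥(LinearMap.ker d ⊓ LinearMap.ker dc) ⧸
            ((LinearMap.ker dc).map d).comap
              (LinearMap.ker d ⊓ LinearMap.ker dc).subtype) ≃ₗ[ℂ]
          (↥(LinearMap.ker dc) ⧸
            (LinearMap.range dc).comap (LinearMap.ker dc).subtype),
      ∀ (x : V) (hx : x ∈ LinearMap.ker d ⊓ LinearMap.ker dc),
        e (Submodule.Quotient.mk ⟨x, hx⟩) = Submodule.Quotient.mk ⟨x, hx.2⟩ := by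
  have had : ∀ x, dc (d x) = - d (dc x) := fun x => by
    have h := LinearMap.congr_fun hanti x
    simp only [LinearMap.add_apply, LinearMap.comp_apply, LinearMap.zero_apply] at h
    exact eq_neg_of_add_eq_zero_right h
  have hdc2 : ∀ x, dc (dc x) = 0 := fun x => LinearMap.congr_fun hdc x
  have key : ∀ x, dc x = 0 → ∃ y, d (dc y) = d x := fun x hx => by
    obtain ⟨y, hy⟩ := hlem.1 (show d x ∈ LinearMap.range d ⊓ LinearMap.ker dc from
      ⟨⟨x, rfl⟩, by rw [SetLike.mem_coe, LinearMap.mem_ker, had, hx, map_zero, neg_zero]⟩)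
    exact ⟨y, hy⟩
  have h1 : LinearMap.ker dc ≤
      (LinearMap.ker d ⊓ LinearMap.ker dc) ⊔ LinearMap.range dc := by
    intro x hx
    rw [LinearMap.mem_ker] at hx
    obtain ⟨y, hy⟩ := key x hx
    refine Submodule.mem_sup.2 ⟨x - dc y, ⟨?_, ?_⟩, dc y, ⟨y, rfl⟩, by abel⟩
    · simp [hy]
    · simp [hx, hdc2]
  have h2 : LinearMap.ker d ⊓ LinearMap.range dc ≤ (LinearMap.ker dc).map d := by
    intro x hx
    obtain ⟨y, hy⟩ := hlem.2 hx
    exact ⟨dc y, hdc2 y, hy⟩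
  have h3 : (LinearMap.ker dc).map d ≤ LinearMap.range dc := by
    rintro _ ⟨x, hx, rfl⟩
    obtain ⟨y, hy⟩ := key x hx
    exact ⟨-d y, by rw [map_neg, had, neg_neg, hy]⟩
  refine ⟨h1, h2, LinearEquiv.ofBijective
    (quotMap (M₁ := LinearMap.ker d ⊓ LinearMap.ker dc) (M₂ := LinearMap.ker dc)
      inf_le_right h3) ⟨?_, ?_⟩, fun x hx => rfl⟩
  · rw [injective_iff_map_eq_zero]
    intro a ha
    obtain ⟨⟨x, hx⟩, rfl⟩ := Submodule.Quotient.mk_surjective _ a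
    have hr : x ∈ LinearMap.range dc :=
      (Submodule.Quotient.mk_eq_zero ((LinearMap.range dc).comap (LinearMap.ker dc).subtype)
        (x := (⟨x, hx.2⟩ : LinearMap.ker dc))).1 ha
    exact (Submodule.Quotient.mk_eq_zero _).2 (h2 ⟨hx.1, hr⟩)
  · intro b
    obtain ⟨⟨x, hx⟩, rfl⟩ := Submodule.Quotient.mk_surjective _ b
    obtain ⟨u, hu, v, hv, huv⟩ := Submodule.mem_sup.1 (h1 hx)
    refine ⟨Submodule.Quotient.mk ⟨u, hu⟩, ?_⟩
    refine (Submodule.Quotient.eq _).2 ?_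
    change u - x ∈ LinearMap.range dc
    rw [← huv, sub_add_cancel_left]
    exact neg_mem hv
end

section
/- A double complex of finite-dimensional complex vector spaces with K^{p,q} = 0 unless 0 ≤ p ≤ n and 0 ≤ q ≤ n satisfies the ∂∂̄-lemma if and only if Σ_{k∈ℤ} |h^k_BC − h^k_A| = 0, that is, if and only if h^k_BC = h^k_A for every k. -/
open Submodule

namespace DoubleComplex

variable {V : Type*} [AddCommGroup V] [Module ℂ V] (D : DoubleComplex V)

/-- The double complex is concentrated in the square `0 ≤ p ≤ n`, `0 ≤ q ≤ n`. -/
def ConcentratedIn (n : ℕ) : Prop :=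
  ∀ p q : ℤ, (p < 0 ∨ (n : ℤ) < p ∨ q < 0 ∨ (n : ℤ) < q) → D.K p q = ⊥

/-- `h^k_∂̄ = Σ_{p+q=k} h_∂̄^{p,q}`. -/
noncomputable def hDolTot (k : ℤ) : ℕ := ∑ᶠ p : ℤ, D.hDol p (k - p)
/-- `h^k_BC = Σ_{p+q=k} h_BC^{p,q}`. -/
noncomputable def hBCTot (k : ℤ) : ℕ := ∑ᶠ p : ℤ, D.hBC p (k - p)
/-- `h^k_A = Σ_{p+q=k} h_A^{p,q}`. -/
noncomputable def hAeTot (k : ℤ) : ℕ := ∑ᶠ p : ℤ, D.hAe p (k - p)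

end DoubleComplex

namespace DoubleComplex

section aux

variable {V : Type*} [AddCommGroup V] [Module ℂ V] (D : DoubleComplex V)

lemma aux_comm (x : V) : D.d1 (D.d2 x) = - D.d2 (D.d1 x) :=
  eq_neg_of_add_eq_zero_left (D.anticomm_apply x)

lemma aux_N (p q : ℤ) : D.bcN p q ≤ D.aeN p q := by
  rintro x ⟨⟨_, h2⟩, h3⟩
  refine ⟨?_, h3⟩
  have h2' : D.d2 x = 0 := h2
  simp [h2']

lemma aux_d1_mem {p q : ℤ} {x : V} (h : x ∈ D.K (p - 1) q) : D.d1 x ∈ D.K p q := by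
  have := D.d1_mem _ _ x h
  rwa [sub_add_cancel] at this

lemma aux_d2_mem {p q : ℤ} {x : V} (h : x ∈ D.K p (q - 1)) : D.d2 x ∈ D.K p q := by
  have := D.d2_mem _ _ x h
  rwa [sub_add_cancel] at this

lemma aux_D (p q : ℤ) : D.bcD p q ≤ D.aeD p q := by
  rintro _ ⟨x, hx, rfl⟩
  exact Submodule.mem_sup_left ⟨D.d2 x, D.aux_d2_mem hx, rfl⟩

/-- Injectivity condition at `(p,q)`. -/
def Inj (p q : ℤ) : Prop :=
  ∀ x, x ∈ D.bcN p q → x ∈ D.aeD p q → x ∈ D.bcD p q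

/-- Surjectivity condition at `(p,q)`. -/
def Sur (p q : ℤ) : Prop :=
  ∀ x, x ∈ D.aeN p q → ∃ y ∈ D.bcN p q, x - y ∈ D.aeD p q

lemma aux_ddbar : D.SatisfiesDdbarLemma ↔ ∀ p q, D.Inj p q := by
  constructor
  · intro h p q x hx hx'
    rw [← h p q]
    exact ⟨⟨hx.1, hx'⟩, hx.2⟩
  · intro h p q
    apply le_antisymm
    · rintro x ⟨⟨h1, h2⟩, h3⟩
      exact h p q x ⟨h1, h3⟩ h2
    · intro x hx
      have hA := D.aux_D p q hx
      obtain ⟨y, hy, rfl⟩ := hx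
      refine ⟨⟨⟨?_, ?_⟩, hA⟩, D.aux_d1_mem (D.aux_d2_mem hy)⟩
      · simp [d1_d1_apply]
      · simp [aux_comm, d2_d2_apply]

lemma aux_inj (p q : ℤ) (h : D.Inj p q) :
    Function.Injective (quotMap (D.aux_N p q) (D.aux_D p q)) := by
  rw [injective_iff_map_eq_zero]
  intro a
  induction a using Submodule.Quotient.induction_on with
  | _ x =>
    intro hx
    have hx' : Submodule.Quotient.mk (Submodule.inclusion (D.aux_N p q) x)
      = (0 : ↥(D.aeN p q) ⧸ (D.aeD p q).comap (D.aeN p q).subtype) := hx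
    rw [Submodule.Quotient.mk_eq_zero] at hx' ⊢
    exact h _ x.2 hx'

lemma aux_sur (p q : ℤ) :
    Function.Surjective (quotMap (D.aux_N p q) (D.aux_D p q)) ↔ D.Sur p q := by
  constructor
  · intro h x hx
    obtain ⟨y, hy⟩ := h (Submodule.Quotient.mk ⟨x, hx⟩)
    induction y using Submodule.Quotient.induction_on with
    | _ y =>
      have hy' : (Submodule.Quotient.mk ⟨x, hx⟩ :
        ↥(D.aeN p q) ⧸ (D.aeD p q).comap (D.aeN p q).subtype) =
        Submodule.Quotient.mk (Submodule.inclusion (D.aux_N p q) y) := hy.symm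
      rw [Submodule.Quotient.eq] at hy'
      exact ⟨y, y.2, hy'⟩
  · intro h a
    induction a using Submodule.Quotient.induction_on with
    | _ x =>
      obtain ⟨y, hy, hxy⟩ := h x x.2
      refine ⟨Submodule.Quotient.mk ⟨y, hy⟩, ?_⟩
      have : (Submodule.Quotient.mk x :
        ↥(D.aeN p q) ⧸ (D.aeD p q).comap (D.aeN p q).subtype) =
        Submodule.Quotient.mk (Submodule.inclusion (D.aux_N p q) ⟨y, hy⟩) := by
        rw [Submodule.Quotient.eq]
        exact hxy
      exact this.symm

lemma aux_step (p q : ℤ) (h1 : D.Sur (p - 1) q) (h2 : D.Sur p (q - 1)) : D.Inj p q := by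
  rintro x ⟨⟨hx1, hx2⟩, _⟩ hxA
  obtain ⟨_, ⟨a, ha, rfl⟩, _, ⟨b, hb, rfl⟩, rfl⟩ := Submodule.mem_sup.1 hxA
  have hx1' : D.d1 (D.d2 b) = 0 := by
    simpa [d1_d1_apply] using hx1
  have hx2' : D.d1 (D.d2 a) = 0 := by
    have : D.d2 (D.d1 a) = 0 := by simpa [d2_d2_apply] using hx2
    simp [aux_comm, this]
  obtain ⟨y, ⟨⟨hy1, _⟩, _⟩, hy⟩ := h1 a ⟨hx2', ha⟩
  obtain ⟨z, ⟨⟨_, hz2⟩, _⟩, hz⟩ := h2 b ⟨hx1', hb⟩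
  obtain ⟨_, ⟨u, hu, rfl⟩, _, ⟨v, hv, rfl⟩, hy'⟩ := Submodule.mem_sup.1 hy
  obtain ⟨_, ⟨u', hu', rfl⟩, _, ⟨v', hv', rfl⟩, hz'⟩ := Submodule.mem_sup.1 hz
  refine ⟨v - u', Submodule.sub_mem _ hv hu', ?_⟩
  have hy1 : D.d1 y = 0 := hy1
  have hz2 : D.d2 z = 0 := hz2
  have e1 := congrArg D.d1 hy'
  have e2 := congrArg D.d2 hz'
  simp only [map_add, map_sub, d1_d1_apply, d2_d2_apply, hy1, hz2, zero_add, add_zero,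
    sub_zero] at e1 e2
  simp [← e1, ← e2, D.aux_comm u']

lemma aux_back (h : ∀ p q, D.Inj p q) (p q : ℤ) : D.Sur p q := by
  rintro x ⟨hx, hxK⟩
  have hx : D.d1 (D.d2 x) = 0 := hx
  have hx' : D.d2 (D.d1 x) = 0 := by simpa [hx] using D.anticomm_apply x
  obtain ⟨v, hv, hv'⟩ := h (p + 1) q (D.d1 x)
    ⟨⟨by simp [d1_d1_apply], by simpa using hx'⟩, D.d1_mem _ _ _ hxK⟩
    (Submodule.mem_sup_left ⟨x, by simpa using hxK, rfl⟩)
  obtain ⟨u, hu, hu'⟩ := h p (q + 1) (D.d2 x)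
    ⟨⟨by simpa using hx, by simp [d2_d2_apply]⟩, D.d2_mem _ _ _ hxK⟩
    (Submodule.mem_sup_right ⟨x, by simpa using hxK, rfl⟩)
  rw [add_sub_cancel_right] at hv hu
  have hv' : D.d1 (D.d2 v) = D.d1 x := hv'
  have hu' : D.d1 (D.d2 u) = D.d2 x := hu'
  refine ⟨x - D.d2 v + D.d1 u, ⟨⟨?_, ?_⟩, ?_⟩, ?_⟩
  · simp [d1_d1_apply, hv']
  · simp [d2_d2_apply, ← hu', aux_comm]
  · exact Submodule.add_mem _ (Submodule.sub_mem _ hxK (D.aux_d2_mem hv)) (D.aux_d1_mem hu)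
  · refine Submodule.mem_sup.2 ⟨D.d1 (-u), ⟨-u, Submodule.neg_mem _ hu, rfl⟩,
      D.d2 v, ⟨v, hv, rfl⟩, ?_⟩
    simp only [map_neg]
    abel

lemma aux_qdim {M N : Submodule ℂ V} (h : M = ⊥) : qdim M N = 0 := by
  subst h
  exact Module.finrank_zero_of_subsingleton

lemma aux_hBC {p q : ℤ} (h : D.K p q = ⊥) : D.hBC p q = 0 :=
  aux_qdim (by simp [bcN, h])

lemma aux_hAe {p q : ℤ} (h : D.K p q = ⊥) : D.hAe p q = 0 :=
  aux_qdim (by simp [aeN, h])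

lemma aux_BCTot {n : ℕ} (hc : D.ConcentratedIn n) (k : ℤ) :
    D.hBCTot k = ∑ p ∈ Finset.Icc (0 : ℤ) n, D.hBC p (k - p) := by
  apply finsum_eq_sum_of_support_subset
  intro p hp
  by_contra h
  apply hp
  apply D.aux_hBC (hc _ _ _)
  simp at h
  omega

lemma aux_AeTot {n : ℕ} (hc : D.ConcentratedIn n) (k : ℤ) :
    D.hAeTot k = ∑ p ∈ Finset.Icc (0 : ℤ) n, D.hAe p (k - p) := by
  apply finsum_eq_sum_of_support_subset
  intro p hp
  by_contra h
  apply hp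
  apply D.aux_hAe (hc _ _ _)
  simp at h
  omega

lemma aux_le [FiniteDimensional ℂ V] (p q : ℤ) (h : D.Inj p q) : D.hBC p q ≤ D.hAe p q :=
  LinearMap.finrank_le_finrank_of_injective (D.aux_inj p q h)

lemma aux_sur_of_eq [FiniteDimensional ℂ V] (p q : ℤ) (h : D.Inj p q)
    (e : D.hBC p q = D.hAe p q) : D.Sur p q :=
  (D.aux_sur p q).1 ((LinearMap.injective_iff_surjective_of_finrank_eq_finrank e).1
    (D.aux_inj p q h))

lemma aux_eq (p q : ℤ) (h : D.Inj p q) (h' : D.Sur p q) : D.hBC p q = D.hAe p q :=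
  (LinearEquiv.ofBijective _ ⟨D.aux_inj p q h, (D.aux_sur p q).2 h'⟩).finrank_eq

lemma aux_Sur_bot (p q : ℤ) (h : D.K p q = ⊥) : D.Sur p q := by
  rintro x ⟨_, hx⟩
  rw [h] at hx
  have : x = 0 := hx
  subst this
  exact ⟨0, Submodule.zero_mem _, by simp⟩

lemma aux_main [FiniteDimensional ℂ V] {n : ℕ} (hc : D.ConcentratedIn n) :
    D.SatisfiesDdbarLemma ↔ ∀ k : ℤ, D.hBCTot k = D.hAeTot k := by
  rw [aux_ddbar]
  constructor
  · intro h k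
    rw [D.aux_BCTot hc, D.aux_AeTot hc]
    exact Finset.sum_congr rfl fun p _ => D.aux_eq _ _ (h _ _) (D.aux_back h _ _)
  · intro h
    have key : ∀ m : ℕ, ∀ p q : ℤ, p + q = (m : ℤ) - 1 → D.Sur p q := by
      intro m
      induction m with
      | zero =>
        intro p q hpq
        exact D.aux_Sur_bot _ _ (hc _ _ (by push_cast at hpq; omega))
      | succ m ih =>
        intro p q hpq
        have inj : ∀ r : ℤ, D.Inj r ((m : ℤ) - r) := fun r =>
          D.aux_step _ _ (ih _ _ (by ring)) (ih _ _ (by ring))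
        have hk := h m
        rw [D.aux_BCTot hc, D.aux_AeTot hc] at hk
        have hq : q = m - p := by push_cast at hpq; omega
        subst hq
        by_cases hp : p ∈ Finset.Icc (0 : ℤ) n
        · exact D.aux_sur_of_eq _ _ (inj p)
            ((Finset.sum_eq_sum_iff_of_le fun r _ => D.aux_le _ _ (inj r)).1 hk p hp)
        · apply D.aux_Sur_bot _ _ (hc _ _ _)
          simp at hp
          omega
    have all : ∀ p q, D.Sur p q := by
      intro p q
      by_cases hpq : 0 ≤ p + q
      · exact key (p + q + 1).toNat p q (by omega)
      · exact D.aux_Sur_bot _ _ (hc _ _ (by omega))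
    exact fun p q => D.aux_step p q (all _ _) (all _ _)

end aux

end DoubleComplex

open DoubleComplex in
/-- A double complex of finite-dimensional complex vector spaces with `K^{p,q} = 0`
unless `0 ≤ p ≤ n` and `0 ≤ q ≤ n` satisfies the `∂∂̄`-lemma if and only if
`Σ_{k∈ℤ} |h^k_BC − h^k_A| = 0`, that is, iff `h^k_BC = h^k_A` for every `k`. -/
theorem ddbar_iff_hBC_eq_hAe {V : Type*} [AddCommGroup V] [Module ℂ V]
    [FiniteDimensional ℂ V] (D : DoubleComplex V) (n : ℕ) (hc : D.ConcentratedIn n) :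
    (D.SatisfiesDdbarLemma ↔ (∑ᶠ k : ℤ, |(D.hBCTot k : ℤ) - (D.hAeTot k : ℤ)|) = 0) ∧
    (D.SatisfiesDdbarLemma ↔ ∀ k : ℤ, D.hBCTot k = D.hAeTot k) := by
  have hm := D.aux_main hc
  refine ⟨?_, hm⟩
  rw [hm]
  constructor
  · intro h
    simp [h]
  · intro h k
    have hs : (∑ᶠ k : ℤ, |(D.hBCTot k : ℤ) - (D.hAeTot k : ℤ)|) =
        ∑ k ∈ Finset.Icc (0 : ℤ) (2 * n), |(D.hBCTot k : ℤ) - (D.hAeTot k : ℤ)| := by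
      apply finsum_eq_sum_of_support_subset
      intro k hk
      by_contra hk'
      apply hk
      simp only [Finset.coe_Icc, Set.mem_Icc] at hk'
      have z : ∀ p : ℤ, D.K p (k - p) = ⊥ := fun p => hc _ _ (by omega)
      simp [hBCTot, hAeTot, D.aux_hBC (z _), D.aux_hAe (z _)]
    by_cases hk : k ∈ Finset.Icc (0 : ℤ) (2 * n)
    · rw [hs, Finset.sum_eq_zero_iff_of_nonneg fun _ _ => abs_nonneg _] at h
      have := abs_eq_zero.1 (h k hk)
      omega
    · simp only [Finset.mem_Icc] at hk
      have z : ∀ p : ℤ, D.K p (k - p) = ⊥ := fun p => hc _ _ (by omega)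
      simp [hBCTot, hAeTot, D.aux_hBC (z _), D.aux_hAe (z _)]
end

section
/- Let a bounded double complex of complex vector spaces satisfy (im ∂ ∩ im ∂̄) ∩ K^{p,q} ⊆ ∂∂̄K^{p-1,q-1} for every (p,q) with p+q = k+1. Then every d-closed element α of Tot^k is d-cohomologous to an element all of whose bidegree components are both ∂-closed and ∂̄-closed; that is, there exists β ∈ Tot^{k-1} such that each (p,q)-component of α + dβ lies in ker ∂ ∩ ker ∂̄. In particular, the natural map ⊕_{p+q=k} H_BC^{p,q} → H_dR^k is surjective. -/
open Submodule

namespace DoubleComplex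

variable {V : Type*} [AddCommGroup V] [Module ℂ V] (D : DoubleComplex V)

lemma bcN_le_dRN (k p : ℤ) : D.bcN p (k - p) ≤ D.dRN k := by
  rintro x ⟨⟨h1, h2⟩, hK⟩
  constructor
  · have h1' : D.d1 x = 0 := h1
    have h2' : D.d2 x = 0 := h2
    show D.dT x = 0
    simp [dT, LinearMap.add_apply, h1', h2']
  · exact le_iSup (fun r => D.K r (k - r)) p hK

lemma bcD_le_dRD (k p : ℤ) : D.bcD p (k - p) ≤ D.dRD k := by
  rintro x ⟨y, hy, rfl⟩
  refine ⟨D.d2 y, ?_, ?_⟩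
  · have h := D.d2_mem (p - 1) (k - p - 1) y hy
    rw [show k - p - 1 + 1 = k - p by ring] at h
    have hle : D.K (p - 1) (k - p) ≤ D.Tot (k - 1) := by
      have h2 := le_iSup (fun r => D.K r (k - 1 - r)) (p - 1)
      rwa [show k - 1 - (p - 1) = k - p by ring] at h2
    exact hle h
  · show D.dT (D.d2 y) = (D.d1 ∘ₗ D.d2) y
    have h2 : D.d2 (D.d2 y) = 0 := D.d2_d2_apply y
    simp [dT, LinearMap.add_apply, LinearMap.comp_apply, h2]

open DirectSum in
/-- The natural map `⊕_{p+q=k} H_BC^{p,q} → H_dR^k`. -/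
noncomputable def bcToDR (k : ℤ) :
    (⨁ p : ℤ, ↥(D.bcN p (k - p)) ⧸ (D.bcD p (k - p)).comap (D.bcN p (k - p)).subtype)
      →ₗ[ℂ] (↥(D.dRN k) ⧸ (D.dRD k).comap (D.dRN k).subtype) :=
  DirectSum.toModule ℂ ℤ _ fun p => quotMap (D.bcN_le_dRN k p) (D.bcD_le_dRD k p)

end DoubleComplex

theorem aux_fs_of {V : Type*} [AddCommGroup V] {f g : ℤ → V} (hf : f.HasFiniteSupport)
    (h : ∀ p, f p = 0 → g p = 0) : g.HasFiniteSupport :=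
  Set.Finite.subset hf fun p hp => fun hfp => hp (h p hfp)

theorem aux_fs_shift {V : Type*} [AddCommGroup V] {f : ℤ → V} (hf : f.HasFiniteSupport) (c : ℤ) :
    (fun p => f (p + c)).HasFiniteSupport :=
  Set.Finite.preimage (f := fun p : ℤ => p + c) (fun a _ b _ h => add_right_cancel h) hf

theorem aux_finsum_shift {V : Type*} [AddCommGroup V] (f : ℤ → V) (c : ℤ) :
    ∑ᶠ p, f (p + c) = ∑ᶠ p, f p :=
  finsum_comp_equiv (Equiv.addRight c)

theorem aux_finsum_zero {V : Type*} [AddCommGroup V] [Module ℂ V] (D : DoubleComplex V) (n : ℤ)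
    (f : ℤ → V) (hf : f.HasFiniteSupport) (hm : ∀ p, f p ∈ D.K p (n - p))
    (h : ∑ᶠ p, f p = 0) (p : ℤ) : f p = 0 := by
  have hi := D.isInternal.submodule_iSupIndep
  have hi2 := hi.comp (f := fun p : ℤ => (p, n - p)) (fun a b h => (Prod.mk.inj h).1)
  rw [iSupIndep_iff_finsetSum_eq_zero_imp_eq_zero] at hi2
  by_contra hp
  apply hp
  refine hi2 (Set.Finite.toFinset hf) f (fun i _ => hm i) ?_ p ?_
  · rw [← h, finsum_eq_sum_of_support_subset]
    exact fun i hi => (Set.Finite.mem_toFinset _).2 hi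
  · exact (Set.Finite.mem_toFinset _).2 hp

theorem aux_finsum_mem {V : Type*} [AddCommGroup V] [Module ℂ V] (A : ℤ → Submodule ℂ V)
    (f : ℤ → V) (h : ∀ p, f p ∈ A p) : ∑ᶠ p, f p ∈ ⨆ p, A p :=
  finsum_induction (fun x => x ∈ ⨆ p, A p) (zero_mem _) (fun _ _ ha hb => add_mem ha hb)
    fun p => le_iSup A p (h p)

theorem aux_first {V : Type*} [AddCommGroup V] [Module ℂ V]
    (D : DoubleComplex V) (k : ℤ)
    (hlem : ∀ p q : ℤ, p + q = k + 1 →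
      D.conjD p q ⊓ D.dolD p q ≤ D.bcD p q) :
    ∀ α ∈ D.dRN k, ∃ β ∈ D.Tot (k - 1),
      α + D.dT β ∈ ⨆ p : ℤ, D.bcN p (k - p) := by
  rintro α ⟨hd, hT⟩
  obtain ⟨f, hfm, rfl⟩ := (Submodule.mem_iSup_iff_exists_finsupp _ _).1 hT
  have hff : (f : ℤ → V).HasFiniteSupport := f.finite_support
  have hsum : (f.sum fun _ x => x) = ∑ᶠ p, f p := by
    rw [finsum_eq_sum_of_support_subset (s := f.support) _ (by simp)]; rfl
  rw [hsum] at hd ⊢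
  have f1 : (fun p => D.d1 (f p)).HasFiniteSupport := aux_fs_of hff (by simp +contextual)
  have f2 : (fun p => D.d2 (f p)).HasFiniteSupport := aux_fs_of hff (by simp +contextual)
  have f1s : (fun p => D.d1 (f (p + -1))).HasFiniteSupport := aux_fs_shift f1 (-1)
  have hrel : ∀ p, D.d1 (f (p + -1)) + D.d2 (f p) = 0 := by
    apply aux_finsum_zero D (k + 1) (fun p => D.d1 (f (p + -1)) + D.d2 (f p))
    · exact (Set.Finite.union f1s f2).subset (Function.support_add _ _)
    · intro p
      apply add_mem
      · have := D.d1_mem _ _ _ (hfm (p + -1))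
        convert this using 2 <;> ring
      · have := D.d2_mem _ _ _ (hfm p)
        convert this using 2; ring
    · rw [finsum_add_distrib f1s f2, aux_finsum_shift (fun p => D.d1 (f p)), ← map_finsum D.d1 hff,
        ← map_finsum D.d2 hff]
      exact hd
  have hg : ∀ p, ∃ g ∈ D.K (p - 1) (k - p), D.d1 (D.d2 g) = D.d2 (f p) ∧
      (D.d2 (f p) = 0 → g = 0) := by
    intro p
    by_cases h0 : D.d2 (f p) = 0
    · exact ⟨0, zero_mem _, by simp [h0], fun _ => rfl⟩
    have : D.d2 (f p) ∈ D.bcD p (k + 1 - p) := by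
      apply hlem _ _ (by ring)
      constructor
      · refine ⟨-f (p + -1), ?_, ?_⟩
        · apply neg_mem
          have := hfm (p + -1)
          rwa [show k - (p + -1) = k + 1 - p by ring] at this
        · rw [map_neg, neg_eq_iff_add_eq_zero]; exact hrel p
      · refine ⟨f p, ?_, rfl⟩
        rw [show k + 1 - p - 1 = k - p by ring]
        exact hfm p
    obtain ⟨g, hgm, hge⟩ := this
    refine ⟨g, ?_, hge, fun h => absurd h h0⟩
    rw [show k + 1 - p - 1 = k - p by ring] at hgm
    exact hgm
  choose g hgm hge hg0 using hg
  have hgf : g.HasFiniteSupport := aux_fs_of f2 hg0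
  have g1 : (fun p => D.d1 (g p)).HasFiniteSupport := aux_fs_of hgf (by simp +contextual)
  have g2 : (fun p => D.d2 (g p)).HasFiniteSupport := aux_fs_of hgf (by simp +contextual)
  have g2s : (fun p => D.d2 (g (p + 1))).HasFiniteSupport := aux_fs_shift g2 1
  have g12 : (fun p => D.d1 (g p) + D.d2 (g (p + 1))).HasFiniteSupport :=
    (Set.Finite.union g1 g2s).subset (Function.support_add _ _)
  refine ⟨∑ᶠ p, g p, ?_, ?_⟩
  · rw [← aux_finsum_shift g 1]
    apply aux_finsum_mem
    intro p
    convert hgm (p + 1) using 2 <;> ring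
  · have : D.dT (∑ᶠ p, g p) = ∑ᶠ p, (D.d1 (g p) + D.d2 (g (p + 1))) := by
      rw [finsum_add_distrib g1 g2s, aux_finsum_shift (fun p => D.d2 (g p)), ← map_finsum D.d1 hgf,
        ← map_finsum D.d2 hgf]
      rfl
    rw [this, ← finsum_add_distrib hff g12]
    apply aux_finsum_mem
    intro p
    refine ⟨⟨?_, ?_⟩, ?_⟩
    · show D.d1 _ = 0
      have h := hrel (p + 1)
      rw [← hge, add_neg_cancel_right] at h
      simp only [map_add, D.d1_d1_apply, zero_add]
      exact h
    · show D.d2 _ = 0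
      simp only [map_add, D.d2_d2_apply, add_zero]
      rw [← hge]
      exact D.anticomm_apply _
    · refine add_mem (hfm p) (add_mem ?_ ?_)
      · have := D.d1_mem _ _ _ (hgm p)
        convert this using 2; ring
      · have := D.d2_mem _ _ _ (hgm (p + 1))
        convert this using 2 <;> ring

open DoubleComplex in
/-- For a bounded double complex satisfying `(im ∂ ∩ im ∂̄) ∩ K^{p,q} ⊆ ∂∂̄K^{p-1,q-1}`
in total degree `p + q = k + 1`: every `d`-closed element of `Tot^k` is
`d`-cohomologous to an element all of whose bidegree components lie in
`ker ∂ ∩ ker ∂̄`; in particular the natural map `⊕_{p+q=k} H_BC^{p,q} → H_dR^k`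
is surjective. -/
theorem dclosed_cohomologous_to_pure_closed {V : Type*} [AddCommGroup V] [Module ℂ V]
    (D : DoubleComplex V) (hb : D.Bounded) (k : ℤ)
    (hlem : ∀ p q : ℤ, p + q = k + 1 →
      D.conjD p q ⊓ D.dolD p q ≤ D.bcD p q) :
    (∀ α ∈ D.dRN k, ∃ β ∈ D.Tot (k - 1),
      α + D.dT β ∈ ⨆ p : ℤ, D.bcN p (k - p)) ∧
    Function.Surjective (D.bcToDR k) := by
  have h1 := aux_first D k hlem
  refine ⟨h1, ?_⟩
  intro x
  obtain ⟨⟨α, hα⟩, rfl⟩ := Submodule.Quotient.mk_surjective _ x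
  obtain ⟨β, hβ, h⟩ := h1 α hα
  have hle : (⨆ p : ℤ, D.bcN p (k - p)) ≤
      ((LinearMap.range (D.bcToDR k)).comap (Submodule.mkQ _)).map (D.dRN k).subtype := by
    refine iSup_le fun p y hy => ?_
    refine ⟨⟨y, D.bcN_le_dRN k p hy⟩, ?_, rfl⟩
    refine ⟨DirectSum.lof ℂ ℤ (fun p : ℤ => ↥(D.bcN p (k - p)) ⧸
      (D.bcD p (k - p)).comap (D.bcN p (k - p)).subtype) p (Submodule.Quotient.mk ⟨y, hy⟩), ?_⟩
    rw [bcToDR, DirectSum.toModule_lof]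
    rfl
  obtain ⟨⟨y, hy⟩, ⟨z, hz⟩, hyz⟩ := hle h
  refine ⟨z, hz.trans ?_⟩
  refine (Submodule.Quotient.eq _).2 ?_
  refine ⟨β, hβ, ?_⟩
  have hyz' : y = α + D.dT β := hyz
  simp [hyz']
end

section
/- Let L be a Lie algebra over a field F, and for each k ≥ 0 let d be the Chevalley–Eilenberg differential sending an alternating k-linear form α : L^k → F to the alternating (k+1)-linear form (dα)(y_1,…,y_{k+1}) = Σ_{1≤i<j≤k+1} (−1)^{i+j} α([y_i,y_j], y_1, …, ŷ_i, …, ŷ_j, …, y_{k+1}) (hats denoting omitted arguments). Then d∘d = 0. -/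
/-- The Chevalley–Eilenberg differential: it sends a `k`-argument form
`α : L^k → F` to the `(k+1)`-argument form
`(dα)(y_1,…,y_{k+1}) = Σ_{i<j} (−1)^{i+j} α([y_i,y_j], y_1,…,ŷ_i,…,ŷ_j,…,y_{k+1})`
(hats denoting omitted arguments; here indices are 0-based, which yields the same
signs as the 1-based formula). -/
def ceDiff (F : Type*) [Field F] (L : Type*) [LieRing L] [LieAlgebra F L] :
    ∀ k : ℕ, ((Fin k → L) → F) → (Fin (k + 1) → L) → F
  | 0, _, _ => 0
  | (k + 1), α, y =>
      ∑ j : Fin (k + 2), ∑ i : Fin (k + 2),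
        if hij : i < j then
          (-1 : F) ^ ((i : ℕ) + (j : ℕ)) *
            α (Fin.cons ⁅y i, y j⁆
                (fun t : Fin k =>
                  y (j.succAbove
                      ((⟨(i : ℕ), lt_of_lt_of_le (Fin.lt_def.mp hij)
                          (Nat.lt_succ_iff.mp j.isLt)⟩ : Fin (k + 1)).succAbove t))))
        else 0

section CEHelpers

set_option linter.unusedSectionVars false

variable {F : Type*} [Field F] {L : Type*} [LieRing L] [LieAlgebra F L]

/-- Insertion of `x` in the first slot. -/
def ceIns {k : ℕ} (x : L) (α : (Fin (k + 1) → L) → F) : (Fin k → L) → F :=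
  fun v => α (Fin.cons x v)

theorem ceIns_ext {k : ℕ} {α β : (Fin (k + 1) → L) → F}
    (h : ∀ x, ceIns x α = ceIns x β) : α = β := by
  funext v
  have := congrFun (h (v 0)) (Fin.tail v)
  simpa [ceIns] using this

@[simp] theorem ceIns_add {k : ℕ} (x : L) (α β : (Fin (k + 1) → L) → F) :
    ceIns x (α + β) = ceIns x α + ceIns x β := rfl
@[simp] theorem ceIns_neg {k : ℕ} (x : L) (α : (Fin (k + 1) → L) → F) :
    ceIns x (-α) = -ceIns x α := rfl
@[simp] theorem ceIns_zero {k : ℕ} (x : L) :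
    ceIns x (0 : (Fin (k + 1) → L) → F) = 0 := rfl

/-- Lie derivative, up to sign. -/
def ceLie (x : L) : ∀ k : ℕ, ((Fin k → L) → F) → (Fin k → L) → F
  | 0, _ => 0
  | (k + 1), α => fun v =>
      ceIns ⁅x, v 0⁆ α (Fin.tail v) + ceLie x k (ceIns (v 0) α) (Fin.tail v)

theorem ceLie_zero_form (x : L) (α : (Fin 0 → L) → F) : ceLie x 0 α = 0 := rfl

theorem ceIns_ceLie {k : ℕ} (x y : L) (α : (Fin (k + 1) → L) → F) :
    ceIns y (ceLie x (k + 1) α) = ceIns ⁅x, y⁆ α + ceLie x k (ceIns y α) := by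
  funext v
  simp [ceIns, ceLie]

@[simp] theorem ceLie_add (x : L) : ∀ (k : ℕ) (α β : (Fin k → L) → F),
    ceLie x k (α + β) = ceLie x k α + ceLie x k β
  | 0, _, _ => by simp [ceLie]
  | k + 1, α, β => by
    apply ceIns_ext; intro y
    simp only [ceIns_ceLie, ceIns_add, ceLie_add x k]; abel

@[simp] theorem ceLie_neg (x : L) : ∀ (k : ℕ) (α : (Fin k → L) → F),
    ceLie x k (-α) = -ceLie x k α
  | 0, _ => by simp [ceLie]
  | k + 1, α => by
    apply ceIns_ext; intro y
    simp only [ceIns_ceLie, ceIns_neg, ceLie_neg x k]; abel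

@[simp] theorem ceDiff_add : ∀ (k : ℕ) (α β : (Fin k → L) → F),
    ceDiff F L k (α + β) = ceDiff F L k α + ceDiff F L k β
  | 0, _, _ => by funext v; simp [ceDiff]
  | k + 1, α, β => by
    funext v
    simp only [ceDiff, Pi.add_apply, ← Finset.sum_add_distrib]
    refine Finset.sum_congr rfl fun j _ => Finset.sum_congr rfl fun i _ => ?_
    split_ifs <;> ring

@[simp] theorem ceDiff_neg : ∀ (k : ℕ) (α : (Fin k → L) → F),
    ceDiff F L k (-α) = -ceDiff F L k α
  | 0, _ => by funext v; simp [ceDiff]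
  | k + 1, α => by
    funext v
    simp only [ceDiff, Pi.neg_apply, ← Finset.sum_neg_distrib]
    refine Finset.sum_congr rfl fun j _ => Finset.sum_congr rfl fun i _ => ?_
    split_ifs <;> ring

theorem ceDiff_zero_form (α : (Fin 0 → L) → F) : ceDiff F L 0 α = 0 := by
  funext v; simp [ceDiff]

/-- Antisymmetry in the first two slots. -/
def ceSwap : ∀ k : ℕ, ((Fin k → L) → F) → Prop
  | 0, _ => True
  | 1, _ => True
  | (_ + 2), α => ∀ x y, ceIns y (ceIns x α) = -ceIns x (ceIns y α)

/-- Hereditary version of alternating. -/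
def ceGood : ∀ k : ℕ, ((Fin k → L) → F) → Prop
  | 0, _ => True
  | (k + 1), α => (∀ x y, ceIns (x + y) α = ceIns x α + ceIns y α) ∧
      ceSwap (k + 1) α ∧ ∀ x, ceGood k (ceIns x α)

theorem ceGood.add : ∀ {k : ℕ} {α β : (Fin k → L) → F}, ceGood k α → ceGood k β →
    ceGood k (α + β)
  | 0, _, _, _, _ => trivial
  | k + 1, α, β, ha, hb => by
    refine ⟨fun x y => ?_, ?_, fun x => (ha.2.2 x).add (hb.2.2 x)⟩
    · simp only [ceIns_add, ha.1, hb.1]; abel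
    · cases k with
      | zero => trivial
      | succ k =>
        intro x y
        simp only [ceIns_add]
        rw [ha.2.1 x y, hb.2.1 x y]; abel

theorem ceGood.neg : ∀ {k : ℕ} {α : (Fin k → L) → F}, ceGood k α → ceGood k (-α)
  | 0, _, _ => trivial
  | k + 1, α, ha => by
    refine ⟨fun x y => ?_, ?_, fun x => (ha.2.2 x).neg⟩
    · simp only [ceIns_neg, ha.1]; abel
    · cases k with
      | zero => trivial
      | succ k =>
        intro x y
        simp only [ceIns_neg]
        rw [ha.2.1 x y]

theorem ceGood.lie (x : L) : ∀ {k : ℕ} {α : (Fin k → L) → F}, ceGood k α →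
    ceGood k (ceLie x k α)
  | 0, _, _ => trivial
  | k + 1, α, ha => by
    refine ⟨fun y z => ?_, ?_, fun y => ?_⟩
    · simp only [ceIns_ceLie, lie_add, ha.1, ceLie_add]; abel
    · cases k with
      | zero => trivial
      | succ k =>
        intro y z
        simp only [ceIns_ceLie, ceIns_add]
        rw [ha.2.1 y z, ha.2.1 ⁅x, y⁆ z, ha.2.1 y ⁅x, z⁆, ceLie_neg]; abel
    · rw [ceIns_ceLie]
      exact (ha.2.2 _).add (ceGood.lie x (ha.2.2 y))

theorem ceGood.ins_neg {k : ℕ} {α : (Fin (k + 1) → L) → F} (ha : ceGood (k + 1) α) (x : L) :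
    ceIns (-x) α = -ceIns x α := by
  have h0 : ceIns 0 α = 0 := by simpa using ha.1 0 0
  have := ha.1 (-x) x
  rw [neg_add_cancel, h0] at this
  exact eq_neg_of_add_eq_zero_left this.symm

theorem ceLie_add_left (x y : L) : ∀ {k : ℕ} {α : (Fin k → L) → F}, ceGood k α →
    ceLie (x + y) k α = ceLie x k α + ceLie y k α
  | 0, _, _ => by simp [ceLie]
  | k + 1, α, ha => by
    apply ceIns_ext; intro z
    simp only [ceIns_ceLie, ceIns_add, add_lie, ha.1, ceLie_add_left x y (ha.2.2 z)]; abel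

theorem ceLie_comm (x y : L) : ∀ {k : ℕ} {α : (Fin k → L) → F}, ceGood k α →
    ceLie x k (ceLie y k α) + ceLie ⁅x, y⁆ k α = ceLie y k (ceLie x k α)
  | 0, _, _ => by simp [ceLie]
  | k + 1, α, ha => by
    apply ceIns_ext; intro z
    have ih := ceLie_comm x y (ha.2.2 z)
    have hj : ceIns ⁅⁅x, y⁆, z⁆ α = ceIns ⁅x, ⁅y, z⁆⁆ α - ceIns ⁅y, ⁅x, z⁆⁆ α := by
      rw [lie_lie, sub_eq_add_neg, ha.1, ha.ins_neg, sub_eq_add_neg]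
    simp only [ceIns_ceLie, ceIns_add, ceLie_add, hj, ← ih]; abel

theorem ceLie_eq_sum (x : L) : ∀ {k : ℕ} {α : (Fin (k + 1) → L) → F}, ceGood (k + 1) α →
    ∀ v : Fin (k + 1) → L, ceLie x (k + 1) α v =
      ∑ j : Fin (k + 1), (-1 : F) ^ (j : ℕ) * α (Fin.cons ⁅x, v j⁆ (fun t => v (j.succAbove t)))
  | 0, α, _, v => by
    simp [ceLie, ceIns]
    rfl
  | k + 1, α, ha, v => by
    rw [Fin.sum_univ_succ, ceLie]
    beta_reduce
    rw [ceLie_eq_sum x (ha.2.2 (v 0))]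
    congr 1
    · simp [ceIns, Fin.tail_def]
    · refine Finset.sum_congr rfl fun j _ => ?_
      have h := congrFun (ha.2.1 (v 0) ⁅x, v j.succ⁆) (fun t => v (j.succAbove t).succ)
      simp only [ceIns, Pi.neg_apply] at h ⊢
      simp only [Fin.tail, Fin.val_succ, pow_succ]
      rw [h]
      have : (fun t => v (j.succ.succAbove t)) =
          (Fin.cons (v 0) (fun t => v (j.succAbove t).succ) : Fin (k + 1) → L) := by
        funext t
        refine Fin.cases ?_ (fun t => ?_) t <;> simp
      rw [this]; ring

theorem ceIns_ceDiff (x : L) {k : ℕ} {α : (Fin (k + 1) → L) → F} (ha : ceGood (k + 1) α) :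
    ceIns x (ceDiff F L (k + 1) α) = -(ceDiff F L k (ceIns x α) + ceLie x (k + 1) α) := by
  funext v
  simp only [Pi.neg_apply, Pi.add_apply]
  rw [ceLie_eq_sum x ha, ceIns, ceDiff, Fin.sum_univ_succ]
  have h0 : ∀ i : Fin (k + 2), ¬ i < 0 := fun i => Fin.not_lt_zero i
  simp only [h0, dite_false, Finset.sum_const_zero, zero_add]
  simp_rw [Fin.sum_univ_succ (n := k + 1)]
  rw [Finset.sum_add_distrib, neg_add, add_comm]
  congr 1
  · cases k with
    | zero =>
      rw [ceDiff_zero_form, Pi.zero_apply, neg_zero]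
      refine Finset.sum_eq_zero fun j _ => Finset.sum_eq_zero fun i _ => ?_
      rw [dif_neg]
      rw [show i = j from Subsingleton.elim (α := Fin 1) i j]
      exact lt_irrefl _
    | succ k =>
      rw [ceDiff, ← Finset.sum_neg_distrib]
      refine Finset.sum_congr rfl fun j _ => ?_
      rw [← Finset.sum_neg_distrib]
      refine Finset.sum_congr rfl fun i _ => ?_
      by_cases hij : i < j
      · have hij' : i.succ < j.succ := Fin.succ_lt_succ_iff.mpr hij
        rw [dif_pos hij, dif_pos hij']
        have hi : (i : ℕ) < k + 1 := by have := j.isLt; have := Fin.lt_def.mp hij; omega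
        have h := congrFun (ha.2.1 x ⁅v i, v j⁆)
          (fun t => v (j.succAbove ((⟨(i : ℕ), hi⟩ : Fin (k + 1)).succAbove t)))
        simp only [ceIns, Pi.neg_apply] at h ⊢
        rw [h]
        have : (fun t => (Fin.cons x v : Fin (k + 3) → L) (j.succ.succAbove
            ((⟨((i.succ : Fin (k + 3)) : ℕ), by simpa using hi⟩ : Fin (k + 2)).succAbove t))) =
          (Fin.cons x (fun t => v (j.succAbove ((⟨(i : ℕ), hi⟩ : Fin (k + 1)).succAbove t))) :
            Fin (k + 1) → L) := by
          have e : (⟨((i.succ : Fin (k + 3)) : ℕ), by simpa using hi⟩ : Fin (k + 2)) =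
            (⟨(i : ℕ), hi⟩ : Fin (k + 1)).succ := rfl
          rw [e]
          generalize (⟨(i : ℕ), hi⟩ : Fin (k + 1)) = i'
          funext t
          refine Fin.cases ?_ (fun t => ?_) t <;> simp
        rw [this]
        simp only [Fin.cons_succ, Fin.val_succ]
        ring
      · have hij' : ¬ i.succ < j.succ := fun h => hij (Fin.succ_lt_succ_iff.mp h)
        rw [dif_neg hij, dif_neg hij', neg_zero]
  · rw [← Finset.sum_neg_distrib]
    refine Finset.sum_congr rfl fun j _ => ?_
    rw [dif_pos (Fin.succ_pos j)]
    have : (fun t => (Fin.cons x v : Fin (k + 2) → L) (j.succ.succAbove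
        ((⟨((0 : Fin (k + 2)) : ℕ), Nat.succ_pos k⟩ : Fin (k + 1)).succAbove t))) =
        fun t => v (j.succAbove t) := by
      funext t
      have e : (⟨((0 : Fin (k + 2)) : ℕ), Nat.succ_pos k⟩ : Fin (k + 1)) = 0 := rfl
      rw [e]; simp
    rw [this]
    simp only [Fin.cons_succ, Fin.cons_zero, Fin.val_succ, Fin.val_zero]
    ring

theorem ceGood_zero : ∀ k : ℕ, ceGood k (0 : (Fin k → L) → F)
  | 0 => trivial
  | k + 1 => by
    refine ⟨fun x y => by simp, ?_, fun x => ceGood_zero k⟩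
    cases k with
    | zero => trivial
    | succ k => intro x y; simp

theorem ceGood.diff : ∀ {k : ℕ} {α : (Fin k → L) → F}, ceGood k α →
    ceGood (k + 1) (ceDiff F L k α)
  | 0, α, _ => by rw [ceDiff_zero_form]; exact ceGood_zero 1
  | k + 1, α, ha => by
    refine ⟨fun x y => ?_, ?_, fun x => ?_⟩
    · simp only [ceIns_ceDiff _ ha, ha.1, ceLie_add_left x y ha, ceDiff_add]; abel
    · intro x y
      have hn : ceIns ⁅y, x⁆ α = -ceIns ⁅x, y⁆ α := by rw [← lie_skew, ha.ins_neg]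
      simp only [ceIns_ceDiff _ ha, ceIns_neg, ceIns_add, ceIns_ceLie, hn]
      cases k with
      | zero => simp [ceDiff_zero_form, ceLie_zero_form]
      | succ k =>
        rw [ceIns_ceDiff _ (ha.2.2 x), ceIns_ceDiff _ (ha.2.2 y), ha.2.1 x y, ceDiff_neg]
        abel
    · rw [ceIns_ceDiff _ ha]
      exact ((ceGood.diff (ha.2.2 x)).add (ha.lie x)).neg

theorem ceLie_ceDiff (x : L) : ∀ {k : ℕ} {α : (Fin k → L) → F}, ceGood k α →
    ceLie x (k + 1) (ceDiff F L k α) = ceDiff F L k (ceLie x k α)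
  | 0, α, _ => by
    simp only [ceDiff_zero_form]
    simpa using ceLie_add x 1 (0 : (Fin 1 → L) → F) 0
  | k + 1, α, ha => by
    apply ceIns_ext; intro y
    rw [ceIns_ceLie, ceIns_ceDiff _ ha, ceIns_ceDiff _ ha, ceIns_ceDiff _ (ha.lie x),
      ceIns_ceLie, ← ceLie_comm x y ha]
    simp only [ceLie_neg, ceLie_add, ceDiff_add, ceLie_ceDiff x (ha.2.2 y)]
    abel

theorem ceDiff_ceDiff_good : ∀ {k : ℕ} {α : (Fin k → L) → F}, ceGood k α →
    ceDiff F L (k + 1) (ceDiff F L k α) = 0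
  | 0, α, _ => by
    rw [ceDiff_zero_form]
    simpa using ceDiff_add 1 (0 : (Fin 1 → L) → F) 0
  | k + 1, α, ha => by
    apply ceIns_ext; intro x
    rw [ceIns_ceDiff _ ha.diff, ceIns_ceDiff _ ha, ceLie_ceDiff x ha, ceDiff_neg, ceDiff_add,
      ceDiff_ceDiff_good (ha.2.2 x)]
    simp

theorem ceGood_alternating : ∀ {k : ℕ} (α : AlternatingMap F L F (Fin k)), ceGood k (⇑α)
  | 0, _ => trivial
  | k + 1, α => by
    refine ⟨fun x y => ?_, ?_, fun x => ceGood_alternating (α.curryLeft x)⟩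
    · funext v
      exact α.toMultilinearMap.cons_add v x y
    · cases k with
      | zero => trivial
      | succ k =>
        intro x y
        funext v
        simp only [ceIns, Pi.neg_apply]
        rw [← α.map_swap _ (show (0 : Fin (k + 2)) ≠ 1 by simp)]
        congr 1
        funext t
        refine Fin.cases ?_ (fun t => Fin.cases ?_ (fun t => ?_) t) t
        · simp
        · simp
        · rw [Function.comp, Equiv.swap_apply_of_ne_of_ne] 
          · simp
          · simp
          · simp [Fin.ext_iff]

end CEHelpers

/-- For a Lie algebra `L` over a field `F`, the Chevalley–Eilenberg differential
squares to zero on alternating forms: `d (d α) = 0`. -/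
theorem ceDiff_ceDiff_eq_zero (F : Type*) [Field F] (L : Type*) [LieRing L]
    [LieAlgebra F L] (k : ℕ) (α : AlternatingMap F L F (Fin k)) :
    ceDiff F L (k + 1) (ceDiff F L k (⇑α)) = 0 := by
  exact ceDiff_ceDiff_good (ceGood_alternating α)
end
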